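/- arXiv:2307.10964 — 4 statements merged into one kernel-verified Lean document; each statement's English description precedes it below -/
import Mathlib

section
/- Let E be a CBER on a standard Borel space X and let μ be a Borel probability measure on X. If E is μ-2-amenable, then E is μ-hyperfinite. In particular, if E is Borel 2-amenable, then E is measure-hyperfinite. -/
open MeasureTheory Function Filter

/-! ### Countable Borel equivalence relations -/

section CBER

variable {X Y : Type*} [MeasurableSpace X] [MeasurableSpace Y]

/-- A countable Borel equivalence relation on a standard Borel space. -/
def IsCBER (E : X → X → Prop) : Prop :=
  Equivalence E ∧ MeasurableSet {p : X × X | E p.1 p.2} ∧ ∀ x : X, {y | E x y}.Countable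

/-- `B` meets every `E`-class in exactly one point. -/
def IsTransversal (E : X → X → Prop) (B : Set X) : Prop :=
  ∀ x : X, ∃! y : X, y ∈ B ∧ E x y

/-- A CBER is smooth if it admits a Borel transversal. -/
def SmoothRel (E : X → X → Prop) : Prop :=
  ∃ B : Set X, MeasurableSet B ∧ IsTransversal E B

/-- A Borel equivalence relation all of whose classes are finite. -/
def IsFiniteBorelEquivalence (E : X → X → Prop) : Prop :=
  Equivalence E ∧ MeasurableSet {p : X × X | E p.1 p.2} ∧ ∀ x : X, {y | E x y}.Finite

/-- A CBER is (Borel) hyperfinite if it is the increasing union of a sequence of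
Borel equivalence relations with finite classes. -/
def Hyperfinite (E : X → X → Prop) : Prop :=
  ∃ F : ℕ → X → X → Prop,
    (∀ i, IsFiniteBorelEquivalence (F i)) ∧
    (∀ i x y, F i x y → F (i + 1) x y) ∧
    (∀ x y, E x y ↔ ∃ i, F i x y)

/-- Borel reducibility of equivalence relations. -/
def BorelReducible (E : X → X → Prop) (F : Y → Y → Prop) : Prop :=
  ∃ f : X → Y, Measurable f ∧ ∀ x x' : X, E x x' ↔ F (f x) (f x')

/-- Borel bireducibility of equivalence relations. -/
def BorelBireducible (E : X → X → Prop) (F : Y → Y → Prop) : Prop :=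
  BorelReducible E F ∧ BorelReducible F E

/-- The saturation `[A]_E` of a set `A`: the smallest `E`-invariant set containing `A`. -/
def Saturation (E : X → X → Prop) (A : Set X) : Set X :=
  {x : X | ∃ a ∈ A, E x a}

end CBER

/-! ### ℓ¹ machinery, amenability of CBERs -/

section Amen

variable {X : Type*} [MeasurableSpace X]

/-- ℓ¹ distance between two summable functions. -/
noncomputable def l1dist {A : Type*} (p q : A → ℝ) : ℝ :=
  ∑' a : A, |p a - q a|

/-- `p` is a probability measure concentrated on the `E`-class of `x`
(identified with its density). -/
def IsProbOnClass (E : X → X → Prop) (p : X → ℝ) (x : X) : Prop :=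
  (∀ y, 0 ≤ p y) ∧ (∀ y, p y ≠ 0 → E x y) ∧ HasSum p 1

/-- A CBER is Borel amenable if there is a sequence of Borel assignments of probability
measures on the classes which are asymptotically invariant. -/
def BorelAmenable (E : X → X → Prop) : Prop :=
  ∃ p : ℕ → X → X → ℝ,
    (∀ i x, IsProbOnClass E (p i x) x) ∧
    (∀ i, Measurable fun q : X × X => p i q.1 q.2) ∧
    (∀ x y, E x y → ∀ ε : ℝ, 0 < ε → ∀ᶠ i in atTop, l1dist (p i x) (p i y) < ε)

/-- A CBER is Borel 2-amenable if there is a double sequence of Borel assignments of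
probability measures on the classes which are asymptotically invariant in the
iterated-limit sense. -/
def Borel2Amenable (E : X → X → Prop) : Prop :=
  ∃ p : ℕ → ℕ → X → X → ℝ,
    (∀ i j x, IsProbOnClass E (p i j x) x) ∧
    (∀ i j, Measurable fun q : X × X => p i j q.1 q.2) ∧
    (∀ x y, E x y → ∀ ε : ℝ, 0 < ε →
      ∀ᶠ i in atTop, ∀ᶠ j in atTop, l1dist (p i j x) (p i j y) < ε)

/-- `E` is μ-hyperfinite: hyperfinite off a μ-null set. -/
def MuHyperfinite (E : X → X → Prop) (μ : Measure X) : Prop :=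
  ∃ A : Set X, MeasurableSet A ∧ μ Aᶜ = 0 ∧ Hyperfinite (fun a b : A => E a b)

/-- `E` is μ-amenable: Borel amenable off a μ-null set. -/
def MuAmenable (E : X → X → Prop) (μ : Measure X) : Prop :=
  ∃ A : Set X, MeasurableSet A ∧ μ Aᶜ = 0 ∧ BorelAmenable (fun a b : A => E a b)

/-- `E` is μ-2-amenable: Borel 2-amenable off a μ-null set. -/
def Mu2Amenable (E : X → X → Prop) (μ : Measure X) : Prop :=
  ∃ A : Set X, MeasurableSet A ∧ μ Aᶜ = 0 ∧ Borel2Amenable (fun a b : A => E a b)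

/-- `E` is measure-hyperfinite: μ-hyperfinite for every Borel probability measure μ. -/
def MeasureHyperfinite (E : X → X → Prop) : Prop :=
  ∀ μ : Measure X, IsProbabilityMeasure μ → MuHyperfinite E μ

end Amen

/-! ### Reiter functions and uniform coamenability -/

section Reiter

/-- A (finitely or infinitely supported) probability function on a countable set. -/
def IsProbFun {A : Type*} (p : A → ℝ) : Prop :=
  (∀ a, 0 ≤ p a) ∧ HasSum p 1

/-- The pushforward of `p : Prob(G)` under the orbit map `g ↦ g • x`. -/
noncomputable def pushMeasure {G X : Type*} [Group G] [MulAction G X]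
    (p : G → ℝ) (x : X) : X → ℝ :=
  fun y => ∑' g : {g : G // g • x = y}, p g.1

/-- `p` is an `(S, ε)`-Reiter function for the action `G ↷ X`. -/
def IsReiterFun {G : Type*} (X : Type*) [Group G] [MulAction G X]
    (S : Finset G) (ε : ℝ) (p : G → ℝ) : Prop :=
  IsProbFun p ∧ ∀ s ∈ S, ∀ x : X, l1dist (pushMeasure p x) (pushMeasure p (s • x)) < ε

/-- A subgroup `H ≤ G` is uniformly coamenable if the action `G ↷ G/H` admits
`(S, ε)`-Reiter functions for all finite `S ⊆ G` and all `ε > 0`. -/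
def UniformlyCoamenable {G : Type*} [Group G] (H : Subgroup G) : Prop :=
  ∀ (S : Finset G) (ε : ℝ), 0 < ε → ∃ p : G → ℝ, IsReiterFun (G ⧸ H) S ε p

/-- The Reiter criterion for amenability of a countable group `Q`. -/
def ReiterAmenable (Q : Type*) [Group Q] : Prop :=
  ∀ (S : Finset Q) (ε : ℝ), 0 < ε → ∃ q : Q → ℝ, IsProbFun q ∧
    ∀ s ∈ S, l1dist q (fun x => q (s⁻¹ * x)) < ε

end Reiter

/-! ### Trees, geodesics and the Gromov boundary -/

section Tree

variable {V : Type*} (T : SimpleGraph V)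

/-- The space of infinite geodesics in the graph `T`. -/
def Geo : Set (ℕ → V) :=
  {v | Function.Injective v ∧ ∀ n, T.Adj (v n) (v (n + 1))}

/-- The shift map (the action of the generator of the monoid ℕ) on `Geo T`. -/
def geoShift (v : Geo T) : Geo T :=
  ⟨fun n => v.1 (n + 1),
   fun a b h => by have := v.2.1 h; omega,
   fun n => v.2.2 (n + 1)⟩

/-- Tail equivalence: the orbit equivalence relation of the shift action of the
monoid ℕ on `Geo T`, i.e. the equivalence relation generated by `v ∼ m • v`. -/
def tailRel : Geo T → Geo T → Prop :=
  Relation.EqvGen fun a b => ∃ m : ℕ, b = (geoShift T)^[m] a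

def tailSetoid : Setoid (Geo T) :=
  ⟨tailRel T, Relation.EqvGen.is_equivalence _⟩

/-- The Gromov boundary `∂T = Geo(T)/ℕ`. -/
def Bdry : Type _ := Quotient (tailSetoid T)

instance [MeasurableSpace V] : MeasurableSpace (Bdry T) :=
  inferInstanceAs (MeasurableSpace (Quotient (tailSetoid T)))

variable {G : Type*} [Group G] [MulAction G V]

/-- The action `G ↷ V` is by graph automorphisms of `T`. -/
def IsGraphAction (G : Type*) [Group G] [MulAction G V] : Prop :=
  ∀ (g : G) (v w : V), T.Adj v w ↔ T.Adj (g • v) (g • w)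

variable {T}

/-- The coordinatewise action of `G` on `Geo T`. -/
def geoSmul (h : IsGraphAction T G) (g : G) (v : Geo T) : Geo T :=
  ⟨fun n => g • v.1 n, (MulAction.injective g).comp v.2.1,
   fun n => (h g _ _).mp (v.2.2 n)⟩

lemma geoShift_geoSmul (h : IsGraphAction T G) (g : G) (v : Geo T) :
    geoShift T (geoSmul h g v) = geoSmul h g (geoShift T v) := rfl

lemma iterate_geoShift_geoSmul (h : IsGraphAction T G) (g : G) (m : ℕ) (v : Geo T) :
    (geoShift T)^[m] (geoSmul h g v) = geoSmul h g ((geoShift T)^[m] v) := by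
  induction m generalizing v with
  | zero => rfl
  | succ m ih =>
      rw [Function.iterate_succ_apply, Function.iterate_succ_apply,
        geoShift_geoSmul, ih]

lemma tailRel_geoSmul (h : IsGraphAction T G) (g : G) {v w : Geo T}
    (hvw : tailRel T v w) : tailRel T (geoSmul h g v) (geoSmul h g w) := by
  induction hvw with
  | rel a b hab =>
      obtain ⟨m, rfl⟩ := hab
      exact Relation.EqvGen.rel _ _ ⟨m, (iterate_geoShift_geoSmul h g m a).symm⟩
  | refl a => exact Relation.EqvGen.refl _
  | symm a b _ ih => exact Relation.EqvGen.symm _ _ ih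
  | trans a b c _ _ ih1 ih2 => exact Relation.EqvGen.trans _ _ _ ih1 ih2

/-- The induced action of `G` on the Gromov boundary `∂T`. -/
def bdrySmul (h : IsGraphAction T G) (g : G) : Bdry T → Bdry T :=
  Quotient.map (geoSmul h g) (fun _ _ hab => tailRel_geoSmul h g hab)

/-- The orbit equivalence relation `E_G^{∂T}` of the boundary action. -/
def bdryRel (h : IsGraphAction T G) : Bdry T → Bdry T → Prop :=
  fun x y => ∃ g : G, bdrySmul h g x = y

/-- The orbit equivalence relation `E_G^{Geo(T)}`. -/
def geoRel (h : IsGraphAction T G) : Geo T → Geo T → Prop :=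
  fun v w => ∃ g : G, geoSmul h g v = w

end Tree

/-! ### Stabilizers of geodesics and of their initial segments -/

section Stab

variable (G : Type*) {V : Type*} [Group G] [MulAction G V]

/-- The (pointwise) stabilizer of an infinite sequence of vertices. -/
def ptwiseStab (v : ℕ → V) : Subgroup G where
  carrier := {g : G | ∀ k : ℕ, g • v k = v k}
  one_mem' := fun k => one_smul _ _
  mul_mem' := fun {a b} ha hb k => by rw [mul_smul, hb k, ha k]
  inv_mem' := fun {a} ha k => inv_smul_eq_iff.mpr (ha k).symm

/-- The stabilizer of the initial segment `(v 0, …, v n)`. -/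
def initStab (v : ℕ → V) (n : ℕ) : Subgroup G where
  carrier := {g : G | ∀ k ≤ n, g • v k = v k}
  one_mem' := fun k _ => one_smul _ _
  mul_mem' := fun {a b} ha hb k hk => by rw [mul_smul, hb k hk, ha k hk]
  inv_mem' := fun {a} ha k hk => inv_smul_eq_iff.mpr (ha k hk).symm

/-- The stabilizer of a finite geodesic given as a tuple of vertices. -/
def finStab {n : ℕ} (f : Fin n → V) : Subgroup G where
  carrier := {g : G | ∀ i : Fin n, g • f i = f i}
  one_mem' := fun i => one_smul _ _
  mul_mem' := fun {a b} ha hb i => by rw [mul_smul, hb i, ha i]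
  inv_mem' := fun {a} ha i => inv_smul_eq_iff.mpr (ha i).symm

end Stab

/-! ### Orbit equivalence relations of monoid actions -/

section MonoidOrbit

/-- The orbit equivalence relation of a monoid action: the equivalence relation
generated by `x ∼ m • x`. -/
def monOrbitRel (M : Type*) {X : Type*} [Monoid M] [MulAction M X] :
    X → X → Prop :=
  Relation.EqvGen fun x y => ∃ m : M, y = m • x

end MonoidOrbit

/-!
Round the amenability measures: there is a Borel map `s` sending `x` to a point charged by `q x` (or
to `x`) such that `s x ≠ s y` happens, with respect to a given finite measure `ν` on pairs, with
probability at most about twice the average distance of `q x` and `q y`. This is minimum-wise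
hashing (correlated sampling) with the random choices replaced by an averaging argument. The fibres
of `s` lie in `E`-classes, so they are countable, and disintegrating along `s` makes them finite
outside of a small set. Hence some finite Borel subequivalence relation of `E` contains all pairs
outside of a set of small `ν`-measure, as soon as `q x` and `q y` are close on `ν`-average.

For a 2-amenable `E` and any finite `ν` concentrated on `E`, the iterated limit provides such `q`,
and Borel–Cantelli yields a sequence of finite Borel subequivalence relations `F n` to which
`ν`-almost every pair eventually belongs. Apply this to a measure equivalent to the sum of all
`μ ⊗ q i j`: for `μ`-almost every `x`, all the points charged by any `q i j x` are eventually
`F n`-related to `x`. Two equivalent points `x` and `y` have a charged point in common for some `i`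
and `j`, so they are eventually `F n`-related, and the relations `⋂ n ≥ m, F n` increase to `E` off
a null set.
-/

open ProbabilityTheory Topology
open scoped ENNReal NNReal

section FibrewiseSums

variable {A X : Type*} [MeasurableSpace A] [MeasurableSpace X]

lemma lt_tsum_iff_exists_injective {ι : Type*} (f : ι → ℝ≥0∞) (c : ℝ≥0∞) :
    c < ∑' i, f i ↔ ∃ n : ℕ, ∃ v : Fin n → ι, Injective v ∧ c < ∑ k, f (v k) := by
  classical
  rw [ENNReal.tsum_eq_iSup_sum, lt_iSup_iff]
  constructor
  · rintro ⟨s, hs⟩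
    refine ⟨s.card, fun k => (s.equivFin.symm k : ι),
      Subtype.val_injective.comp s.equivFin.symm.injective, ?_⟩
    rwa [Equiv.sum_comp s.equivFin.symm (fun i : s => f i), Finset.sum_coe_sort s f]
  · rintro ⟨n, v, hv, h⟩
    refine ⟨Finset.univ.image v, ?_⟩
    rwa [Finset.sum_image hv.injOn]

lemma measurableSet_injective [MeasurableEq X] {ι : Type*} [Countable ι] :
    MeasurableSet {v : ι → X | Injective v} := by
  have : {v : ι → X | Injective v} = ⋂ (i : ι) (j : ι) (_ : i ≠ j), {v | v i = v j}ᶜ := by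
    ext v
    simp [Injective, not_imp_not]
  rw [this]
  exact .iInter fun i => .iInter fun j => .iInter fun _ =>
    (measurableSet_eq_fun (measurable_pi_apply i) (measurable_pi_apply j)).compl

variable [StandardBorelSpace X] {f g : A → X → ℝ≥0∞} {c : ℝ≥0∞}

lemma analyticSet_lt_tsum [TopologicalSpace A] [PolishSpace A] [BorelSpace A]
    (hf : Measurable (uncurry f)) (c : ℝ≥0∞) : AnalyticSet {a | c < ∑' y, f a y} := by
  have : {a | c < ∑' y, f a y} = ⋃ n : ℕ, Prod.fst ''
      {z : A × (Fin n → X) | Injective z.2 ∧ c < ∑ k, f z.1 (z.2 k)} := by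
    ext a
    simp [lt_tsum_iff_exists_injective]
  rw [this]
  refine .iUnion fun n => MeasurableSet.analyticSet_image ?_ measurable_fst
  have hsum : Measurable fun z : A × (Fin n → X) => ∑ k, f z.1 (z.2 k) :=
    Finset.measurable_sum _ fun k _ =>
      hf.comp (by fun_prop : Measurable fun z : A × (Fin n → X) => (z.1, z.2 k))
  exact (measurable_snd measurableSet_injective).inter (measurableSet_lt measurable_const hsum)

lemma analyticSet_le_tsum [TopologicalSpace A] [PolishSpace A] [BorelSpace A]
    (hf : Measurable (uncurry f)) (c : ℝ≥0∞) : AnalyticSet {a | c ≤ ∑' y, f a y} := by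
  rcases eq_or_ne c 0 with rfl | hc
  · simp only [zero_le, Set.ofPred_true]
    exact MeasurableSet.univ.analyticSet
  obtain ⟨r, -, hr, hr'⟩ := exists_seq_strictMono_tendsto' (pos_iff_ne_zero.2 hc)
  have : {a | c ≤ ∑' y, f a y} = ⋂ n, {a | r n < ∑' y, f a y} := by
    ext a
    simp only [Set.mem_ofPred_eq, Set.mem_iInter]
    exact ⟨fun h n => (hr n).2.trans_le h, fun h => le_of_tendsto' hr' fun n => (h n).le⟩
  rw [this]
  exact .iInter fun n => analyticSet_lt_tsum hf _

/- The superlevel sets of a fibrewise sum are analytic; if a second fibrewise sum complements the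
first one to a constant, then they are coanalytic too, hence Borel by Suslin's theorem. -/
lemma measurable_tsum_of_tsum_add_tsum_eq_const [StandardBorelSpace A]
    (hf : Measurable (uncurry f)) (hg : Measurable (uncurry g)) (hc : c ≠ ∞)
    (hfg : ∀ a, ∑' y, f a y + ∑' y, g a y = c) : Measurable fun a => ∑' y, f a y := by
  let _ := upgradeStandardBorel A
  refine measurable_of_Ioi fun b => (analyticSet_lt_tsum hf b).measurableSet_of_compl ?_
  have hcompl : {a | b < ∑' y, f a y}ᶜ = {a | c - b ≤ ∑' y, g a y} := by
    ext a
    have hfin : ∑' y, g a y ≠ ∞ := ne_top_of_le_ne_top hc (hfg a ▸ le_add_self)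
    simp only [Set.mem_compl_iff, Set.mem_ofPred_eq, not_lt, tsub_le_iff_left, ← hfg a]
    exact (ENNReal.add_le_add_iff_right hfin).symm
  exact hcompl ▸ analyticSet_le_tsum hg _

end FibrewiseSums

section PMFKernels

variable {A X : Type*} [MeasurableSpace A] [StandardBorelSpace A] [MeasurableSpace X]
  [StandardBorelSpace X]

lemma measurable_pmf_toMeasure {q : A → PMF X} (hq : Measurable fun z : A × X => q z.1 z.2) :
    Measurable fun a => (q a).toMeasure := by
  have hind : ∀ {s : Set X}, MeasurableSet s →
      Measurable (uncurry fun a => s.indicator (q a)) :=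
    fun hs => hq.indicator (measurable_snd hs)
  refine Measure.measurable_of_measurable_coe _ fun s hs => ?_
  simp only [PMF.toMeasure_apply _ hs]
  refine measurable_tsum_of_tsum_add_tsum_eq_const (hind hs) (hind hs.compl) ENNReal.one_ne_top
    fun a => ?_
  rw [← ENNReal.tsum_add, ← (q a).tsum_coe]
  exact tsum_congr fun y => congrFun (Set.indicator_self_add_compl s (q a)) y

/-- The Markov kernel defined by a jointly measurable family of discrete probability measures. -/
noncomputable def pmfKernel (q : A → PMF X) (hq : Measurable fun z : A × X => q z.1 z.2) :
    Kernel A X :=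
  ⟨fun a => (q a).toMeasure, measurable_pmf_toMeasure hq⟩

instance isMarkovKernel_pmfKernel (q : A → PMF X) (hq : Measurable fun z : A × X => q z.1 z.2) :
    IsMarkovKernel (pmfKernel q hq) :=
  ⟨fun a => PMF.toMeasure.isProbabilityMeasure (q a)⟩

lemma ae_toMeasure_iff {p : PMF X} {P : X → Prop} :
    (∀ᵐ y ∂p.toMeasure, P y) ↔ ∀ y ∈ p.support, P y := by
  rw [ae_iff, p.toMeasure_apply_eq_toOuterMeasure, p.toOuterMeasure_apply_eq_zero_iff,
    Set.disjoint_left]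
  simp

lemma ae_compProd_pmfKernel_mem_support {q : A → PMF X}
    (hq : Measurable fun z : A × X => q z.1 z.2) (μ : Measure A) [SFinite μ] :
    ∀ᵐ z ∂(μ ⊗ₘ pmfKernel q hq), z.2 ∈ (q z.1).support := by
  have hsupp : MeasurableSet {z : A × X | z.2 ∈ (q z.1).support} :=
    (hq (measurableSet_singleton 0)).compl
  exact (Measure.ae_compProd_iff hsupp).2 (.of_forall fun a => ae_toMeasure_iff.2 fun _ => id)

end PMFKernels

section TotalVariation

variable {A X : Type*}

/-- The total variation distance of two discrete probability measures, written as the mass by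
which the first one exceeds the second one (the subtraction is truncated). -/
noncomputable def tvDist (p q : PMF X) : ℝ≥0∞ := ∑' y, (p y - q y)

lemma tvDist_add_tsum_min (p q : PMF X) : tvDist p q + ∑' y, min (p y) (q y) = 1 := by
  rw [tvDist, ← ENNReal.tsum_add, ← p.tsum_coe]
  exact tsum_congr fun y => tsub_add_min

lemma tvDist_le_one (p q : PMF X) : tvDist p q ≤ 1 :=
  tvDist_add_tsum_min p q ▸ le_self_add

lemma tvDist_le_ofReal_l1dist {p q : PMF X} {f g : X → ℝ} (hf : Summable f)
    (hg : Summable g) (hp : ∀ y, p y = ENNReal.ofReal (f y))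
    (hq : ∀ y, q y = ENNReal.ofReal (g y)) :
    tvDist p q ≤ ENNReal.ofReal (l1dist f g) := by
  rw [l1dist, ENNReal.ofReal_tsum_of_nonneg (fun _ => abs_nonneg _) (hf.sub hg).abs]
  refine ENNReal.tsum_le_tsum fun y => ?_
  rw [hp, hq, tsub_le_iff_right]
  exact (ENNReal.ofReal_le_ofReal (by linarith [le_abs_self (f y - g y)])).trans
    ENNReal.ofReal_add_le

lemma exists_mem_support_of_tvDist_lt_one {p q : PMF X} (h : tvDist p q < 1) :
    ∃ y, y ∈ p.support ∧ y ∈ q.support := by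
  by_contra! hdisj
  have hmin : ∀ y, min (p y) (q y) = 0 := fun y => by
    by_contra hy
    rw [← ne_eq, ← pos_iff_ne_zero, lt_min_iff] at hy
    exact hdisj y (by simpa using hy.1.ne') (by simpa using hy.2.ne')
  have := tvDist_add_tsum_min p q
  simp only [hmin, tsum_zero, add_zero] at this
  exact h.ne this

lemma measurable_tvDist [MeasurableSpace A] [StandardBorelSpace A] [MeasurableSpace X]
    [StandardBorelSpace X] {p q : A → PMF X} (hp : Measurable fun z : A × X => p z.1 z.2)
    (hq : Measurable fun z : A × X => q z.1 z.2) : Measurable fun a => tvDist (p a) (q a) :=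
  measurable_tsum_of_tsum_add_tsum_eq_const (f := fun a y => p a y - q a y)
    (g := fun a y => min (p a y) (q a y)) (hp.sub hq) (hp.min hq) ENNReal.one_ne_top
    fun a => tvDist_add_tsum_min (p a) (q a)

end TotalVariation

section Selectors

lemma exists_measure_add_setLIntegral_compl_le {ι Ω : Type*} [MeasurableSpace Ω] {ν : Measure Ω}
    {J : Finset ι} (hJ : J.Nonempty) {B L : ι → Set Ω} (hB : ∀ j, MeasurableSet (B j))
    (hL : ∀ j, MeasurableSet (L j)) {η : Ω → ℝ≥0∞} (hη : Measurable η)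
    (h : ∀ᵐ ω ∂ν, ∑ j ∈ J, (B j).indicator 1 ω ≤ (∑ j ∈ J, (L j).indicator 1 ω) * η ω) :
    ∃ j ∈ J, ν (B j) + ∫⁻ ω in (L j)ᶜ, η ω ∂ν ≤ ∫⁻ ω, η ω ∂ν := by
  refine ENNReal.exists_le_of_sum_le hJ ?_
  have hsplit : ∀ j, ∫⁻ ω, η ω ∂ν = ∫⁻ ω, (L j).indicator η ω ∂ν + ∫⁻ ω in (L j)ᶜ, η ω ∂ν :=
    fun j => by rw [lintegral_indicator (hL j), lintegral_add_compl η (hL j)]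
  calc ∑ j ∈ J, (ν (B j) + ∫⁻ ω in (L j)ᶜ, η ω ∂ν)
      = ∫⁻ ω, ∑ j ∈ J, (B j).indicator 1 ω ∂ν + ∑ j ∈ J, ∫⁻ ω in (L j)ᶜ, η ω ∂ν := by
        rw [Finset.sum_add_distrib,
          lintegral_finsetSum _ fun j _ => measurable_one.indicator (hB j)]
        simp only [lintegral_indicator_one (hB _)]
    _ ≤ ∫⁻ ω, ∑ j ∈ J, (L j).indicator η ω ∂ν + ∑ j ∈ J, ∫⁻ ω in (L j)ᶜ, η ω ∂ν := by
        gcongr ?_ + _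
        refine lintegral_mono_ae (h.mono fun ω hω => hω.trans_eq ?_)
        rw [Finset.sum_mul]
        exact Finset.sum_congr rfl fun j _ => by by_cases hj : ω ∈ L j <;> simp [hj]
    _ = ∑ _j ∈ J, ∫⁻ ω, η ω ∂ν := by
        rw [lintegral_finsetSum _ fun j _ => hη.indicator (hL j), ← Finset.sum_add_distrib]
        exact Finset.sum_congr rfl fun j _ => (hsplit j).symm

variable {α β ι : Type*}

/-- The pairs at least one of whose coordinates is accepted by `S`. -/
def acceptedPairs (S : Set α) : Set (α × α) := {z | z.1 ∈ S ∨ z.2 ∈ S}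

/-- The pairs for which accepting with `S` and labelling by `f` fails to give both coordinates the
same label, although `S` accepts one of them. -/
def conflictingPairs (S : Set α) (f : α → β) : Set (α × α) :=
  acceptedPairs S \ {z | z.1 ∈ S ∧ z.2 ∈ S ∧ f z.1 = f z.2}

variable [MeasurableSpace α] [MeasurableSpace β]

lemma measurableSet_acceptedPairs {S : Set α} (hS : MeasurableSet S) :
    MeasurableSet (acceptedPairs S) :=
  (measurable_fst hS).union (measurable_snd hS)

lemma measurableSet_conflictingPairs [MeasurableEq β] {S : Set α} (hS : MeasurableSet S)
    {f : α → β} (hf : Measurable f) : MeasurableSet (conflictingPairs S f) :=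
  (measurableSet_acceptedPairs hS).diff <| (measurable_fst hS).inter <| (measurable_snd hS).inter <|
    measurableSet_eq_fun (hf.comp measurable_fst) (hf.comp measurable_snd)

/- Every `x` takes the label of the first set accepting it. Minimum-wise hashing would order the
sets at random; the averaging lemma chooses them one at a time without loss. -/
lemma exists_measurable_selector [MeasurableEq β] {A : ι → Set α} (hA : ∀ j, MeasurableSet (A j))
    {Y : ι → α → β} (hY : ∀ j, Measurable (Y j)) {d : α → β} (hd : Measurable d)
    {η : α × α → ℝ≥0∞} (hη : Measurable η) (J : Finset ι) (ν : Measure (α × α))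
    (h : ∀ᵐ z ∂ν, ∑ j ∈ J, (conflictingPairs (A j) (Y j)).indicator 1 z ≤
      (∑ j ∈ J, (acceptedPairs (A j)).indicator 1 z) * η z) :
    ∃ s : α → β, Measurable s ∧ (∀ x, s x = d x ∨ ∃ j ∈ J, s x = Y j x) ∧
      ν ((⋃ j ∈ J, acceptedPairs (A j)) ∩ {z | s z.1 ≠ s z.2}) ≤ ∫⁻ z, η z ∂ν := by
  classical
  induction J using Finset.strongInduction generalizing ν with
  | H J ih =>
    rcases J.eq_empty_or_nonempty with rfl | hJ
    · exact ⟨d, hd, by simp, by simp⟩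
    obtain ⟨j, hj, hle⟩ := exists_measure_add_setLIntegral_compl_le hJ
      (fun j => measurableSet_conflictingPairs (hA j) (hY j))
      (fun j => measurableSet_acceptedPairs (hA j)) hη h
    have hLc := (measurableSet_acceptedPairs (hA j)).compl
    obtain ⟨s, hs, hsY, hsν⟩ := ih (J.erase j) (Finset.erase_ssubset hj)
      (ν.restrict (acceptedPairs (A j))ᶜ) (by
        filter_upwards [ae_restrict_of_ae h, ae_restrict_mem hLc] with z hz hzj
        have hzj' : z ∉ conflictingPairs (A j) (Y j) := fun hc => hzj hc.1
        rw [← Finset.add_sum_erase J _ hj, ← Finset.add_sum_erase J _ hj,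
          Set.indicator_of_notMem hzj, Set.indicator_of_notMem hzj'] at hz
        simpa only [zero_add] using hz)
    refine ⟨(A j).piecewise (Y j) s, (hY j).piecewise (hA j) hs, fun x => ?_, ?_⟩
    · by_cases hx : x ∈ A j
      · exact .inr ⟨j, hj, by simp [hx]⟩
      · refine (hsY x).imp (by simp [hx]) fun ⟨i, hi, hix⟩ => ⟨i, Finset.mem_of_mem_erase hi, ?_⟩
        simpa [hx] using hix
    refine le_trans (le_trans (measure_mono ?_) (measure_union_le _ _))
      ((add_le_add_right (hsν.trans' (Measure.le_restrict_apply _ _)) _).trans hle)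
    rintro z ⟨hzJ, hzs⟩
    by_cases hzj : z ∈ acceptedPairs (A j)
    · refine .inl ⟨hzj, fun ⟨h1, h2, h3⟩ => hzs ?_⟩
      simp [h1, h2, h3]
    · have hz1 : z.1 ∉ A j := fun hz => hzj (.inl hz)
      have hz2 : z.2 ∉ A j := fun hz => hzj (.inr hz)
      refine .inr ⟨⟨?_, by simpa [hz1, hz2] using hzs⟩, hzj⟩
      simp only [Set.mem_iUnion, Finset.mem_erase] at hzJ ⊢
      obtain ⟨i, hi, hzi⟩ := hzJ
      exact ⟨i, ⟨fun hij => hzj (hij ▸ hzi), hi⟩, hzi⟩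

end Selectors

section CorrelatedSampling

variable {α β K : Type*}

/-- The points above which `n` lies below the graph of `N • f`, whose values are rounded up. The
`N` first layers of a function bounded by `1` are a discretization of its subgraph. -/
def layer (f : α → ℝ≥0) (N n : ℕ) : Set α := {x | n < ⌈N * f x⌉₊}

lemma measurableSet_layer [MeasurableSpace α] {f : α → ℝ≥0} (hf : Measurable f) (N n : ℕ) :
    MeasurableSet (layer f N n) :=
  measurableSet_lt measurable_const (Nat.measurable_ceil.comp (hf.const_mul _))

lemma sum_fin_ite_val_lt {N k : ℕ} (hk : k ≤ N) :
    ∑ n : Fin N, (if n.val < k then 1 else 0 : ℝ≥0∞) = k := by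
  rw [Finset.sum_boole, Fin.card_filter_val_lt, min_eq_right hk]

lemma ceil_natCast_mul_le {N : ℕ} {r : ℝ≥0} (hr : r ≤ 1) : ⌈N * r⌉₊ ≤ N :=
  Nat.ceil_le.2 (mul_le_of_le_one_right' hr)

lemma sum_indicator_acceptedPairs_layer {f : α → ℝ≥0} (hf : ∀ x, f x ≤ 1) (N : ℕ) (z : α × α) :
    ∑ n : Fin N, (acceptedPairs (layer f N n)).indicator (1 : α × α → ℝ≥0∞) z =
      (max ⌈N * f z.1⌉₊ ⌈N * f z.2⌉₊ : ℕ) := by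
  rw [← sum_fin_ite_val_lt (max_le (ceil_natCast_mul_le (hf z.1)) (ceil_natCast_mul_le (hf z.2)))]
  simp [Set.indicator_apply, acceptedPairs, layer]

lemma sum_indicator_conflictingPairs_layer_add [DecidableEq β] {f : α → ℝ≥0}
    (hf : ∀ x, f x ≤ 1) (y : α → β) (N : ℕ) (z : α × α) :
    ∑ n : Fin N, (conflictingPairs (layer f N n) y).indicator (1 : α × α → ℝ≥0∞) z +
        (if y z.1 = y z.2 then min ⌈N * f z.1⌉₊ ⌈N * f z.2⌉₊ else 0 : ℕ) =
      (max ⌈N * f z.1⌉₊ ⌈N * f z.2⌉₊ : ℕ) := by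
  have hagree : ((if y z.1 = y z.2 then min ⌈N * f z.1⌉₊ ⌈N * f z.2⌉₊ else 0 : ℕ) : ℝ≥0∞) =
      ∑ n : Fin N, {z : α × α | z.1 ∈ layer f N n ∧ z.2 ∈ layer f N n ∧ y z.1 = y z.2}.indicator
        1 z := by
    split_ifs with hy
    · rw [← sum_fin_ite_val_lt ((min_le_left _ _).trans (ceil_natCast_mul_le (hf z.1)))]
      simp [Set.indicator_apply, layer, hy]
    · simp [hy]
  rw [hagree, ← Finset.sum_add_distrib, ← sum_indicator_acceptedPairs_layer hf]
  refine Finset.sum_congr rfl fun n _ => ?_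
  by_cases h1 : z.1 ∈ layer f N n <;> by_cases h2 : z.2 ∈ layer f N n <;>
    by_cases hy : y z.1 = y z.2 <;> simp [acceptedPairs, conflictingPairs, h1, h2, hy]

lemma le_sum_ceil_mul [Fintype K] {w : K → ℝ≥0} (hw : ∑ c, w c = 1) (N : ℕ) :
    N ≤ ∑ c, ⌈N * w c⌉₊ := by
  have : (N : ℝ≥0) ≤ (∑ c, ⌈N * w c⌉₊ : ℕ) := by
    calc (N : ℝ≥0) = ∑ c, N * w c := by rw [← Finset.mul_sum, hw, mul_one]
      _ ≤ (∑ c, ⌈N * w c⌉₊ : ℕ) := by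
        rw [Nat.cast_sum]
        exact Finset.sum_le_sum fun c _ => Nat.le_ceil _
  exact_mod_cast this

lemma sum_ceil_mul_le [Fintype K] {w : K → ℝ≥0} (hw : ∑ c, w c = 1) (N : ℕ) :
    ((∑ c, ⌈N * w c⌉₊ : ℕ) : ℝ≥0) ≤ N + Fintype.card K := by
  calc ((∑ c, ⌈N * w c⌉₊ : ℕ) : ℝ≥0) ≤ ∑ c, (N * w c + 1) := by
        rw [Nat.cast_sum]
        exact Finset.sum_le_sum fun c _ => (Nat.ceil_lt_add_one zero_le).le
    _ = N + Fintype.card K := by simp [Finset.sum_add_distrib, ← Finset.mul_sum, hw]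

/- With `t = ⌈N w⌉` and `t' = ⌈N w'⌉`, each `max t t'` is at most `t + t'` minus the agreement, and
the `t` and the `t'` sum up to `N` up to the rounding error `|K|`. -/
lemma le_sum_max_ceil_mul_of_le_sum_min [Fintype K] {w w' : K → ℝ≥0} (hw : ∑ c, w c = 1)
    (hw' : ∑ c, w' c = 1) {P : K → Prop} [DecidablePred P] {η : ℝ≥0∞}
    (hη : 1 ≤ ((∑ c, if P c then min (w c) (w' c) else 0 : ℝ≥0) : ℝ≥0∞) + η) {N : ℕ} (hN : N ≠ 0)
    {b : ℝ≥0∞} (hb : b + (∑ c, if P c then min ⌈N * w c⌉₊ ⌈N * w' c⌉₊ else 0 : ℕ) =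
      (∑ c, max ⌈N * w c⌉₊ ⌈N * w' c⌉₊ : ℕ)) :
    b ≤ (∑ c, max ⌈N * w c⌉₊ ⌈N * w' c⌉₊ : ℕ) * (2 * η + 2 * Fintype.card K / N) := by
  set overlap : ℝ≥0 := ∑ c, if P c then min (w c) (w' c) else 0
  set agree : ℕ := ∑ c, if P c then min ⌈N * w c⌉₊ ⌈N * w' c⌉₊ else 0
  set total : ℕ := ∑ c, max ⌈N * w c⌉₊ ⌈N * w' c⌉₊
  have htotal : N ≤ total :=
    (le_sum_ceil_mul hw N).trans (Finset.sum_le_sum fun c _ => le_max_left _ _)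
  have htotal_add : total + agree ≤ ∑ c, ⌈N * w c⌉₊ + ∑ c, ⌈N * w' c⌉₊ := by
    rw [← Finset.sum_add_distrib, ← Finset.sum_add_distrib]
    refine Finset.sum_le_sum fun c _ => ?_
    split_ifs <;> omega
  have hrounded : ((total + agree : ℕ) : ℝ≥0) ≤ 2 * N * 1 + 2 * Fintype.card K := by
    calc ((total + agree : ℕ) : ℝ≥0) ≤ (∑ c, ⌈N * w c⌉₊ : ℕ) + (∑ c, ⌈N * w' c⌉₊ : ℕ) := by
          exact_mod_cast htotal_add
      _ ≤ (N + Fintype.card K) + (N + Fintype.card K) :=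
          add_le_add (sum_ceil_mul_le hw N) (sum_ceil_mul_le hw' N)
      _ = 2 * N * 1 + 2 * Fintype.card K := by ring
  have hoverlap : N * overlap ≤ agree := by
    push_cast [overlap, agree, Finset.mul_sum]
    refine Finset.sum_le_sum fun c _ => ?_
    split_ifs
    · rw [mul_min]
      exact min_le_min (Nat.le_ceil _) (Nat.le_ceil _)
    · simp
  have hcancel : b + 2 * agree ≤ (2 * N * η + 2 * Fintype.card K) + 2 * agree := by
    calc b + 2 * agree = ((total + agree : ℕ) : ℝ≥0∞) := by push_cast; rw [← hb]; ring
      _ ≤ 2 * N * 1 + 2 * Fintype.card K := by exact_mod_cast hrounded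
      _ ≤ 2 * N * (overlap + η) + 2 * Fintype.card K := by gcongr
      _ ≤ (2 * N * η + 2 * Fintype.card K) + 2 * agree := by
        have : (N : ℝ≥0∞) * overlap ≤ agree := by exact_mod_cast hoverlap
        calc _ = (2 * N * η + 2 * Fintype.card K) + 2 * (N * overlap) := by ring
          _ ≤ _ := by gcongr
  calc b ≤ 2 * N * η + 2 * Fintype.card K :=
        (ENNReal.add_le_add_iff_right (by finiteness)).1 hcancel
    _ = N * (2 * η + 2 * Fintype.card K / N) := by
        rw [mul_add, ENNReal.mul_div_cancel (by simpa using hN) (by simp)]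
        ring
    _ ≤ total * (2 * η + 2 * Fintype.card K / N) := by gcongr

variable [MeasurableSpace α] [MeasurableSpace β] [MeasurableEq β] [Fintype K]

/- The layers of the weights `m c`, each carrying the label `Y c`, discretize the experiment of
drawing `c` with probability `m c x` and labelling `x` by `Y c x`. -/
lemma exists_measurable_rounding [Nonempty K] [DecidableEq β] {m : K → α → ℝ≥0}
    (hm : ∀ c, Measurable (m c)) (hm1 : ∀ x, ∑ c, m c x = 1) {Y : K → α → β}
    (hY : ∀ c, Measurable (Y c)) {η : α × α → ℝ≥0∞} (hη : Measurable η)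
    (h : ∀ z : α × α, 1 ≤ ((∑ c, if Y c z.1 = Y c z.2 then min (m c z.1) (m c z.2) else 0 :
      ℝ≥0) : ℝ≥0∞) + η z)
    (ν : Measure (α × α)) [IsFiniteMeasure ν] {ε : ℝ≥0∞} (hε : ε ≠ 0) :
    ∃ s : α → β, Measurable s ∧ (∀ x, ∃ c, s x = Y c x) ∧
      ν {z | s z.1 ≠ s z.2} ≤ 2 * ∫⁻ z, η z ∂ν + ε := by
  obtain ⟨N, hNε⟩ := ENNReal.exists_nat_mul_gt hε
    (by finiteness : 2 * Fintype.card K * ν Set.univ ≠ ∞)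
  have hN : N ≠ 0 := by
    rintro rfl
    simp at hNε
  have hm_le : ∀ c x, m c x ≤ 1 := fun c x =>
    hm1 x ▸ Finset.single_le_sum (f := fun c => m c x) (fun _ _ => zero_le) (Finset.mem_univ c)
  have haccepted : ∀ z, ∑ j : K × Fin N, (acceptedPairs (layer (m j.1) N j.2)).indicator 1 z =
      ((∑ c, max ⌈N * m c z.1⌉₊ ⌈N * m c z.2⌉₊ : ℕ) : ℝ≥0∞) := fun z => by
    simp only [Fintype.sum_prod_type, Nat.cast_sum, sum_indicator_acceptedPairs_layer (hm_le _)]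
  obtain ⟨s, hs, hsY, hsν⟩ := exists_measurable_selector
    (A := fun j : K × Fin N => layer (m j.1) N j.2) (fun j => measurableSet_layer (hm j.1) N j.2)
    (Y := fun j => Y j.1) (fun j => hY j.1) (hY (Classical.arbitrary K))
    ((hη.const_mul 2).add_const (2 * Fintype.card K / N : ℝ≥0∞)) Finset.univ ν
    (.of_forall fun z => by
      rw [haccepted]
      refine le_sum_max_ceil_mul_of_le_sum_min (hm1 z.1) (hm1 z.2) (h z) hN ?_
      simp only [Fintype.sum_prod_type, Nat.cast_sum, ← Finset.sum_add_distrib,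
        sum_indicator_conflictingPairs_layer_add (hm_le _)])
  refine ⟨s, hs, fun x => (hsY x).elim (fun hx => ⟨_, hx⟩) fun ⟨j, _, hx⟩ => ⟨j.1, hx⟩, ?_⟩
  have hcover : ⋃ j ∈ (Finset.univ : Finset (K × Fin N)),
      acceptedPairs (layer (m j.1) N j.2) = Set.univ := by
    refine Set.eq_univ_of_forall fun z => ?_
    obtain ⟨c, -, hc⟩ := Finset.exists_ne_zero_of_sum_ne_zero ((hm1 z.1).trans_ne one_ne_zero)
    refine Set.mem_biUnion (Finset.mem_univ (c, ⟨0, Nat.pos_of_ne_zero hN⟩)) (.inl ?_)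
    simpa [layer, pos_iff_ne_zero] using ⟨hN, hc⟩
  rw [hcover, Set.univ_inter] at hsν
  refine hsν.trans ?_
  rw [lintegral_add_right _ measurable_const, lintegral_const_mul _ hη, lintegral_const]
  gcongr
  rw [← ENNReal.mul_div_right_comm]
  exact ENNReal.div_le_of_le_mul (hNε.le.trans_eq (mul_comm _ _))

lemma exists_measurable_rounding_of_sum_add_eq_one [DecidableEq β] {m : K → α → ℝ≥0∞}
    (hm : ∀ c, Measurable (m c)) {r : α → ℝ≥0∞} (hr : Measurable r)
    (hmr : ∀ x, ∑ c, m c x + r x = 1) {Y : K → α → β} (hY : ∀ c, Measurable (Y c)) {d : α → β}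
    (hd : Measurable d) {η : α × α → ℝ≥0∞} (hη : Measurable η)
    (h : ∀ z : α × α,
      1 ≤ (∑ c, if Y c z.1 = Y c z.2 then min (m c z.1) (m c z.2) else 0) + η z)
    (ν : Measure (α × α)) [IsFiniteMeasure ν] {ε : ℝ≥0∞} (hε : ε ≠ 0) :
    ∃ s : α → β, Measurable s ∧ (∀ x, s x = d x ∨ ∃ c, s x = Y c x) ∧
      ν {z | s z.1 ≠ s z.2} ≤ 2 * ∫⁻ z, η z ∂ν + ε := by
  have hr_ne_top : ∀ x, r x ≠ ∞ := fun x =>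
    ne_top_of_le_ne_top ENNReal.one_ne_top (hmr x ▸ le_add_self)
  have hm_ne_top : ∀ c x, m c x ≠ ∞ := fun c x =>
    ne_top_of_le_ne_top ENNReal.one_ne_top (((Finset.single_le_sum (f := fun c => m c x)
      (fun _ _ => zero_le) (Finset.mem_univ c)).trans le_self_add).trans_eq (hmr x))
  obtain ⟨s, hs, hsY, hsν⟩ := exists_measurable_rounding
    (m := fun (o : Option K) x => (o.elim (r x) fun c => m c x).toNNReal)
    (Y := fun (o : Option K) x => o.elim (d x) fun c => Y c x)
    (by rintro (_ | c); exacts [hr.ennreal_toNNReal, (hm c).ennreal_toNNReal])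
    (fun x => by simpa [← ENNReal.coe_inj, add_comm, hr_ne_top, hm_ne_top] using hmr x)
    (by rintro (_ | c); exacts [hd, hY c]) hη (fun z => (h z).trans <| by
      gcongr
      rw [Fintype.sum_option, ENNReal.coe_add, ENNReal.ofNNReal_finsetSum]
      refine le_add_left (Finset.sum_le_sum fun c _ => ?_)
      split_ifs <;> simp_all) ν hε
  refine ⟨s, hs, fun x => ?_, hsν⟩
  obtain ⟨_ | c, hc⟩ := hsY x
  exacts [.inl hc, .inr ⟨c, hc⟩]

end CorrelatedSampling

section AtomSelection

variable {K X : Type*} [MeasurableSpace X]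

lemma exists_measurable_section_of_subsingleton [StandardBorelSpace X] {H : Set (X × X)}
    (hH : MeasurableSet H) (hsub : ∀ x, (Prod.mk x ⁻¹' H).Subsingleton) :
    ∃ Y : X → X, Measurable Y ∧ ∀ x, (x, Y x) ∈ H ∨ Prod.mk x ⁻¹' H = ∅ ∧ Y x = x := by
  classical
  have hinj : ∀ {T}, T ⊆ H → Set.InjOn Prod.fst T := by
    rintro T hT ⟨x, y⟩ hy ⟨-, y'⟩ hy' rfl
    rw [hsub x (hT hy) (hT hy')]
  let Y : X → X := fun x => if h : ∃ y, (x, y) ∈ H then h.choose else x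
  have hY : ∀ x, (x, Y x) ∈ H ∨ Prod.mk x ⁻¹' H = ∅ ∧ Y x = x := fun x => by
    by_cases h : ∃ y, (x, y) ∈ H
    · left; simp only [Y, dif_pos h]; exact h.choose_spec
    · right; exact ⟨Set.eq_empty_of_forall_notMem (not_exists.1 h), dif_neg h⟩
  refine ⟨Y, fun B hB => ?_, hY⟩
  have hpre : Y ⁻¹' B = Prod.fst '' (H ∩ Prod.snd ⁻¹' B) ∪ ((Prod.fst '' H)ᶜ ∩ B) := by
    ext x
    have hdom : x ∈ Prod.fst '' H ↔ (Prod.mk x ⁻¹' H).Nonempty := by simp [Set.Nonempty]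
    have hval : x ∈ Prod.fst '' (H ∩ Prod.snd ⁻¹' B) ↔ ∃ y ∈ Prod.mk x ⁻¹' H, y ∈ B := by simp
    rw [Set.mem_union, Set.mem_inter_iff, Set.mem_compl_iff, hdom, hval]
    rcases hY x with h | ⟨h, hx⟩
    · simp only [show (Prod.mk x ⁻¹' H).Nonempty from ⟨_, h⟩, not_true, false_and, or_false]
      exact ⟨fun hB => ⟨_, h, hB⟩, fun ⟨y, hy, hyB⟩ => by rwa [Set.mem_preimage, hsub x h hy]⟩
    · simp [h, hx]
  rw [hpre]
  exact ((hH.inter (measurable_snd hB)).image_of_measurable_injOn measurable_fst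
    (hinj Set.inter_subset_left)).union
    ((hH.image_of_measurable_injOn measurable_fst (hinj subset_rfl)).compl.inter hB)

lemma pmf_apply_le_toMeasure (p : PMF X) {S : Set X} {y : X} (hy : y ∈ S) :
    p y ≤ p.toMeasure S := by
  rw [← p.toOuterMeasure_apply_singleton]
  exact (measure_mono (Set.singleton_subset_iff.2 hy)).trans
    (p.toOuterMeasure_apply_le_toMeasure_apply S)

/- An atom that both measures charge and that lies in both `H` and `H'` is recovered from its code
by `Y` and by `Y'`, so it contributes to the sum over the codes. -/
lemma one_le_sum_min_toMeasure_add [Fintype K] [DecidableEq X] (p p' : PMF X) {H H' : Set X}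
    (hH : MeasurableSet H) (hH' : MeasurableSet H') {code : X → K} {Y Y' : K → X}
    (hY : ∀ y ∈ H, Y (code y) = y) (hY' : ∀ y ∈ H', Y' (code y) = y) :
    1 ≤ (∑ c, if Y c = Y' c then
        min (p.toMeasure (H ∩ code ⁻¹' {c})) (p'.toMeasure (H' ∩ code ⁻¹' {c})) else 0) +
      (tvDist p p' + (p.toMeasure Hᶜ + p'.toMeasure H'ᶜ)) := by
  set F : K → ℝ≥0∞ := fun c => if Y c = Y' c then
    min (p.toMeasure (H ∩ code ⁻¹' {c})) (p'.toMeasure (H' ∩ code ⁻¹' {c})) else 0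
  have hboth : ∑' y : (H ∩ H' : Set X), min (p y) (p' y) ≤ ∑ c, F c := by
    have hinj : Injective fun y : (H ∩ H' : Set X) => code y := fun y z hyz => Subtype.ext <| by
      rw [← hY y y.2.1, ← hY z z.2.1, show code y = code z from hyz]
    refine (ENNReal.tsum_le_tsum fun y => ?_).trans
      ((ENNReal.tsum_comp_le_tsum_of_injective hinj F).trans_eq (tsum_fintype F))
    simp only [F, hY y y.2.1, hY' y y.2.2, if_true]
    exact min_le_min (pmf_apply_le_toMeasure p ⟨y.2.1, rfl⟩)
      (pmf_apply_le_toMeasure p' ⟨y.2.2, rfl⟩)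
  have hmin : ∑' y, min (p y) (p' y) ≤ ∑ c, F c + (p.toMeasure Hᶜ + p'.toMeasure H'ᶜ) := by
    rw [p.toMeasure_apply hH.compl, p'.toMeasure_apply hH'.compl, ← ENNReal.tsum_add]
    rw [tsum_subtype (H ∩ H') fun y => min (p y) (p' y)] at hboth
    refine le_trans ?_ (add_le_add_left hboth _)
    rw [← ENNReal.tsum_add]
    refine ENNReal.tsum_le_tsum fun y => ?_
    by_cases hy : y ∈ H <;> by_cases hy' : y ∈ H' <;> simp [hy, hy']
  calc 1 = tvDist p p' + ∑' y, min (p y) (p' y) := (tvDist_add_tsum_min p p').symm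
    _ ≤ tvDist p p' + (∑ c, F c + (p.toMeasure Hᶜ + p'.toMeasure H'ᶜ)) := by gcongr
    _ = _ := add_left_comm _ _ _

lemma sum_toMeasure_inter_preimage_singleton_add_compl [Fintype K] [MeasurableSpace K]
    [MeasurableSingletonClass K] (p : PMF X) {H : Set X} (hH : MeasurableSet H) {code : X → K}
    (hcode : Measurable code) :
    ∑ c, p.toMeasure (H ∩ code ⁻¹' {c}) + p.toMeasure Hᶜ = 1 := by
  have hfibre := sum_measure_preimage_singleton (μ := p.toMeasure.restrict H) Finset.univ
    fun c _ => hcode (measurableSet_singleton c)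
  simp only [Measure.restrict_apply' hH, Finset.coe_univ, Set.preimage_univ, Set.inter_univ,
    Set.inter_comm _ H] at hfibre
  rw [hfibre, measure_add_measure_compl hH, measure_univ]

variable [StandardBorelSpace X] {q : X → PMF X}

lemma measurable_toMeasure_prodMk_preimage (hq : Measurable fun z : X × X => q z.1 z.2)
    {H : Set (X × X)} (hH : MeasurableSet H) :
    Measurable fun x => (q x).toMeasure (Prod.mk x ⁻¹' H) :=
  Kernel.measurable_kernel_prodMk_left (κ := pmfKernel q hq) hH

/- The label `c` stands for the only point of code `c` in the section of `H` at `x`; the mass which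
`q x` gives to the complement of this section is moved to `x` itself. -/
lemma exists_measurable_rounding_of_injOn_code [Finite K] [MeasurableSpace K]
    [MeasurableSingletonClass K] {code : X → K} (hcode : Measurable code) {H : Set (X × X)}
    (hH : MeasurableSet H) (hinj : ∀ x, Set.InjOn code (Prod.mk x ⁻¹' H))
    (hq : Measurable fun z : X × X => q z.1 z.2) (ν : Measure (X × X)) [IsFiniteMeasure ν]
    {ε : ℝ≥0∞} (hε : ε ≠ 0) :
    ∃ s : X → X, Measurable s ∧ (∀ x, s x = x ∨ (x, s x) ∈ H) ∧
      ν {z | s z.1 ≠ s z.2} ≤ 2 * ∫⁻ z, (tvDist (q z.1) (q z.2) +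
        ((q z.1).toMeasure (Prod.mk z.1 ⁻¹' H)ᶜ + (q z.2).toMeasure (Prod.mk z.2 ⁻¹' H)ᶜ)) ∂ν +
        ε := by
  classical
  have := Fintype.ofFinite K
  have hHc : ∀ c, MeasurableSet (H ∩ {z | code z.2 = c}) := fun c =>
    hH.inter (measurable_snd (hcode (measurableSet_singleton c)))
  choose Y hY hYH using fun c => exists_measurable_section_of_subsingleton (hHc c)
    fun x y hy z hz => hinj x hy.1 hz.1 (hy.2.trans hz.2.symm)
  have hYcode : ∀ x, ∀ y ∈ Prod.mk x ⁻¹' H, Y (code y) x = y := fun x y hy => by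
    rcases hYH (code y) x with h | ⟨h, -⟩
    · exact hinj x h.1 hy h.2
    · have hmem : y ∈ Prod.mk x ⁻¹' (H ∩ {z | code z.2 = code y}) := ⟨hy, rfl⟩
      simp [h] at hmem
  obtain ⟨s, hs, hsY, hsν⟩ := exists_measurable_rounding_of_sum_add_eq_one
    (fun c => measurable_toMeasure_prodMk_preimage hq (hHc c))
    (measurable_toMeasure_prodMk_preimage hq hH.compl)
    (fun x => sum_toMeasure_inter_preimage_singleton_add_compl (q x) (measurable_prodMk_left hH)
      hcode) hY measurable_id
    ((measurable_tvDist (p := fun z : X × X => q z.1) (q := fun z => q z.2)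
      (hq.comp (by fun_prop : Measurable fun w : (X × X) × X => (w.1.1, w.2)))
      (hq.comp (by fun_prop : Measurable fun w : (X × X) × X => (w.1.2, w.2)))).add <|
      ((measurable_toMeasure_prodMk_preimage hq hH.compl).comp measurable_fst).add
      ((measurable_toMeasure_prodMk_preimage hq hH.compl).comp measurable_snd))
    (fun z => one_le_sum_min_toMeasure_add (q z.1) (q z.2) (measurable_prodMk_left hH)
      (measurable_prodMk_left hH) (hYcode z.1) (hYcode z.2)) ν hε
  refine ⟨s, hs, fun x => (hsY x).elim .inl fun ⟨c, hc⟩ => ?_, hsν⟩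
  rcases hYH c x with h | ⟨-, h⟩
  · exact .inr (hc ▸ h.1)
  · exact .inl (hc.trans h)

end AtomSelection

section HeavyAtoms

variable {A K X : Type*} [MeasurableSpace X]

lemma measurable_kernel_preimage_singleton [MeasurableSpace A] [MeasurableSpace K] [MeasurableEq K]
    (κ : Kernel A X) [IsSFiniteKernel κ] {f : X → K} (hf : Measurable f) :
    Measurable fun z : A × X => κ z.1 (f ⁻¹' {f z.2}) :=
  Kernel.measurable_kernel_prodMk_left (κ := κ.comap (Prod.fst : A × X → A) measurable_fst)
    (t := {w | f w.2 = f w.1.2}) (measurableSet_eq_fun (by fun_prop) (by fun_prop))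

/-- The pairs `(x, y)` such that `y` carries more than half of the mass which `q x` gives to the
points having the same code as `y`. -/
def heavyAtoms (q : A → PMF X) (code : X → K) : Set (A × X) :=
  {z | (q z.1).toMeasure (code ⁻¹' {code z.2}) < 2 * q z.1 z.2}

lemma measurableSet_heavyAtoms [MeasurableSpace A] [StandardBorelSpace A] [StandardBorelSpace X]
    [MeasurableSpace K] [MeasurableEq K] {q : A → PMF X}
    (hq : Measurable fun z : A × X => q z.1 z.2) {code : X → K} (hcode : Measurable code) :
    MeasurableSet (heavyAtoms q code) :=
  measurableSet_lt (measurable_kernel_preimage_singleton (pmfKernel q hq) hcode) (hq.const_mul 2)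

lemma injOn_code_heavyAtoms (q : A → PMF X) (code : X → K) (x : A) :
    Set.InjOn code (Prod.mk x ⁻¹' heavyAtoms q code) := by
  classical
  intro y hy z hz hyz
  by_contra hne
  have hcell : q x y + q x z ≤ (q x).toMeasure (code ⁻¹' {code y}) := by
    rw [← Finset.sum_pair hne, ← PMF.toOuterMeasure_apply_finset]
    refine (measure_mono ?_).trans ((q x).toOuterMeasure_apply_le_toMeasure_apply _)
    simp [Set.insert_subset_iff, hyz]
  have hy' : (q x).toMeasure (code ⁻¹' {code y}) < 2 * q x y := hy
  have hz' : (q x).toMeasure (code ⁻¹' {code y}) < 2 * q x z := hyz ▸ hz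
  rw [two_mul] at hy' hz'
  exact lt_asymm (lt_of_add_lt_add_left (hcell.trans_lt hy'))
    (lt_of_add_lt_add_right (hcell.trans_lt hz'))

lemma tendsto_measure_cylinder (ρ : Measure X) [IsFiniteMeasure ρ] {code : X → ℕ → Bool}
    (hcode : Measurable code) (hinj : Injective code) (y : X) :
    Tendsto (fun k => ρ ((fun y (i : Fin k) => code y i) ⁻¹' {fun i : Fin k => code y i})) atTop
      (𝓝 (ρ {y})) := by
  have hcell : ⋂ k, (fun y (i : Fin k) => code y i) ⁻¹' {fun i : Fin k => code y i} = {y} := by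
    refine Set.eq_singleton_iff_unique_mem.2 ⟨by simp, fun z hz => hinj (funext fun i => ?_)⟩
    exact congrFun (Set.mem_iInter.1 hz (i + 1)) ⟨i, i.lt_succ_self⟩
  rw [← hcell]
  refine tendsto_measure_iInter_atTop (fun k => ?_) (fun k l hkl z hz => ?_) ⟨0, measure_ne_top _ _⟩
  · exact ((by fun_prop : Measurable fun y (i : Fin k) => code y i)
      (measurableSet_singleton _)).nullMeasurableSet
  · exact funext fun i => congrFun hz (i.castLE hkl)

lemma tendsto_toMeasure_compl_heavyAtoms [MeasurableSpace A] [StandardBorelSpace A]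
    [StandardBorelSpace X] {q : A → PMF X} (hq : Measurable fun z : A × X => q z.1 z.2)
    {code : X → ℕ → Bool} (hcode : Measurable code) (hinj : Injective code) (x : A) :
    Tendsto (fun k => (q x).toMeasure
      (Prod.mk x ⁻¹' heavyAtoms q fun y (i : Fin k) => code y i)ᶜ) atTop (𝓝 0) := by
  rw [← measure_empty (μ := (q x).toMeasure)]
  refine tendsto_measure_of_ae_tendsto_indicator_of_isFiniteMeasure atTop .empty
    (fun k => (measurable_prodMk_left (measurableSet_heavyAtoms hq (by fun_prop))).compl) ?_
  have hsupp : ∀ᵐ y ∂(q x).toMeasure, y ∈ (q x).support := ae_toMeasure_iff.2 fun _ => id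
  filter_upwards [hsupp] with y hy
  have hlt : (q x).toMeasure {y} < 2 * q x y := by
    rw [(q x).toMeasure_apply_singleton y (measurableSet_singleton y), two_mul]
    exact ENNReal.lt_add_right ((q x).apply_ne_top y) ((q x).mem_support_iff y |>.1 hy)
  filter_upwards [(tendsto_measure_cylinder (q x).toMeasure hcode hinj y).eventually
    (gt_mem_nhds hlt)] with k hk
  exact iff_of_false (not_not_intro hk) id

/- The atoms which are heavy for the first `k` bits of a code are determined by these bits, and as
`k` grows they exhaust the mass of every `q x`. -/
lemma exists_measurable_rounding_of_pmf [StandardBorelSpace X] {q : X → PMF X}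
    (hq : Measurable fun z : X × X => q z.1 z.2) (ν : Measure (X × X)) [IsFiniteMeasure ν]
    {ε : ℝ≥0∞} (hε : ε ≠ 0) :
    ∃ s : X → X, Measurable s ∧ (∀ x, s x = x ∨ s x ∈ (q x).support) ∧
      ν {z | s z.1 ≠ s z.2} ≤ 2 * ∫⁻ z, tvDist (q z.1) (q z.2) ∂ν + ε := by
  obtain ⟨code, hcode, hinj⟩ :=
    MeasurableSpace.measurable_injection_nat_bool_of_countablySeparated X
  let H : ℕ → Set (X × X) := fun k => heavyAtoms q fun y (i : Fin k) => code y i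
  have hH : ∀ k, MeasurableSet (H k) := fun k => measurableSet_heavyAtoms hq (by fun_prop)
  let rest : ℕ → X × X → ℝ≥0∞ := fun k z =>
    (q z.1).toMeasure (Prod.mk z.1 ⁻¹' H k)ᶜ + (q z.2).toMeasure (Prod.mk z.2 ⁻¹' H k)ᶜ
  have hrest_meas : ∀ k, Measurable (rest k) := fun k =>
    ((measurable_toMeasure_prodMk_preimage hq (hH k).compl).comp measurable_fst).add
      ((measurable_toMeasure_prodMk_preimage hq (hH k).compl).comp measurable_snd)
  have hrest : Tendsto (fun k => 2 * ∫⁻ z, rest k z ∂ν) atTop (𝓝 0) := by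
    have hlim := tendsto_lintegral_of_dominated_convergence (μ := ν) (F := rest) (f := 0)
      (fun _ => 1 + 1) hrest_meas (fun k => .of_forall fun z => add_le_add prob_le_one prob_le_one)
      (by rw [lintegral_const]; finiteness) (.of_forall fun z => by
        simpa using (tendsto_toMeasure_compl_heavyAtoms hq hcode hinj z.1).add
          (tendsto_toMeasure_compl_heavyAtoms hq hcode hinj z.2))
    simpa using ENNReal.Tendsto.const_mul hlim (.inr ENNReal.ofNat_ne_top)
  obtain ⟨k, hk⟩ := (hrest.eventually (gt_mem_nhds (ENNReal.half_pos hε))).exists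
  obtain ⟨s, hs, hsH, hsν⟩ := exists_measurable_rounding_of_injOn_code (by fun_prop) (hH k)
    (injOn_code_heavyAtoms q _) hq ν (ENNReal.half_pos hε).ne'
  refine ⟨s, hs, fun x => (hsH x).imp_right fun h => ?_, hsν.trans ?_⟩
  · exact (q x).mem_support_iff _ |>.2 <| right_ne_zero_of_mul (pos_of_gt h).ne'
  · rw [lintegral_add_right _ (hrest_meas k), mul_add, add_assoc]
    gcongr
    exact (add_le_add_left hk.le _).trans_eq (ENNReal.add_halves ε)

end HeavyAtoms

section FiniteToOne

variable {X : Type*} [MeasurableSpace X]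

lemma exists_measure_lt_const_lt {l : Measure X} [IsFiniteMeasure l] {u : X → ℝ≥0∞}
    (hu : Measurable u) (hu0 : ∀ᵐ x ∂l, u x ≠ 0) {ε : ℝ≥0∞} (hε : ε ≠ 0) :
    ∃ δ ≠ 0, l {x | u x < δ} < ε := by
  have hlim : Tendsto (fun n : ℕ => l {x | u x < (n : ℝ≥0∞)⁻¹}) atTop (𝓝 0) := by
    rw [← measure_empty (μ := l)]
    refine tendsto_measure_of_ae_tendsto_indicator_of_isFiniteMeasure atTop .empty
      (fun n => measurableSet_lt hu measurable_const) ?_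
    filter_upwards [hu0] with x hx
    filter_upwards [ENNReal.tendsto_inv_nat_nhds_zero.eventually
      (gt_mem_nhds (pos_iff_ne_zero.2 hx))] with n hn
    exact iff_of_false (not_lt.2 hn.le) id
  obtain ⟨n, hn⟩ := (hlim.eventually (gt_mem_nhds (pos_iff_ne_zero.2 hε))).exists
  exact ⟨_, ENNReal.inv_ne_zero.2 (ENNReal.natCast_ne_top n), hn⟩

lemma finite_setOf_le_measure_singleton [MeasurableSingletonClass X] (ρ : Measure X)
    [IsFiniteMeasure ρ] {δ : ℝ≥0∞} (hδ : δ ≠ 0) : {x | δ ≤ ρ {x}}.Finite :=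
  Measure.finite_const_le_meas_of_disjoint_iUnion ρ (pos_iff_ne_zero.2 hδ)
    (fun x => measurableSet_singleton x) (fun _ _ hxy => by simpa using hxy) (measure_ne_top _ _)

variable [StandardBorelSpace X] {s : X → X}

lemma ae_condDistrib_singleton_ne_zero [Nonempty X] (hs : Measurable s)
    (hcount : ∀ z, (s ⁻¹' {z}).Countable) (l : Measure X) [IsFiniteMeasure l] :
    ∀ᵐ x ∂l, condDistrib id s l (s x) {x} ≠ 0 := by
  set h := condDistrib id s l
  have hdis : l.map s ⊗ₘ h = l.map (fun x => (s x, x)) :=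
    compProd_map_condDistrib (Y := id) measurable_id.aemeasurable
  have hsing : Measurable fun z : X × X => h z.1 {z.2} :=
    measurable_kernel_preimage_singleton h measurable_id
  have hN : MeasurableSet {z : X × X | z.1 = s z.2 ∧ h z.1 {z.2} = 0} :=
    (measurableSet_eq_fun (by fun_prop) (by fun_prop)).inter (hsing (measurableSet_singleton 0))
  have hnull : ∀ z, h z {x | z = s x ∧ h z {x} = 0} = 0 := fun z => by
    have hc : {x | z = s x ∧ h z {x} = 0}.Countable := (hcount z).mono fun x hx => hx.1.symm
    rw [← Set.biUnion_of_singleton {x | z = s x ∧ h z {x} = 0}, measure_biUnion_null_iff hc]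
    exact fun x hx => hx.2
  have hgraph : l.map (fun x => (s x, x)) {z : X × X | z.1 = s z.2 ∧ h z.1 {z.2} = 0} = 0 := by
    rw [← hdis, Measure.compProd_apply hN]
    simp [hnull]
  rw [Measure.map_apply (by fun_prop) hN] at hgraph
  simpa [ae_iff] using hgraph

/- Disintegrate `l` along `s`: almost every point is an atom of its fibre measure, and a finite
measure has only finitely many atoms of mass at least `δ`. -/
lemma exists_measurableSet_finite_fibres (hs : Measurable s)
    (hcount : ∀ z, (s ⁻¹' {z}).Countable) (l : Measure X) [IsFiniteMeasure l] {ε : ℝ≥0∞}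
    (hε : ε ≠ 0) : ∃ Z, MeasurableSet Z ∧ l Zᶜ < ε ∧ ∀ z, (s ⁻¹' {z} ∩ Z).Finite := by
  rcases isEmpty_or_nonempty X
  · exact ⟨∅, .empty, by simpa [pos_iff_ne_zero, Measure.eq_zero_of_isEmpty l], by simp⟩
  have hu : Measurable fun x => condDistrib id s l (s x) {x} :=
    (measurable_kernel_preimage_singleton (condDistrib id s l) measurable_id).comp
      (hs.prodMk measurable_id)
  obtain ⟨δ, hδ, hlδ⟩ := exists_measure_lt_const_lt hu
    (ae_condDistrib_singleton_ne_zero hs hcount l) hε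
  refine ⟨{x | condDistrib id s l (s x) {x} < δ}ᶜ, (measurableSet_lt hu measurable_const).compl,
    by rwa [compl_compl], fun z => ?_⟩
  refine (finite_setOf_le_measure_singleton (condDistrib id s l z) hδ).subset ?_
  rintro x ⟨rfl, hx⟩
  exact not_lt.1 (show ¬ _ < δ from hx)

end FiniteToOne

section FiniteBorelEquivalences

variable {X Y : Type*} [MeasurableSpace X] [MeasurableSpace Y]

lemma IsFiniteBorelEquivalence.comap {E : X → X → Prop} (hE : IsFiniteBorelEquivalence E)
    {f : Y → X} (hf : Measurable f) (hinj : Injective f) :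
    IsFiniteBorelEquivalence fun a b => E (f a) (f b) :=
  ⟨hE.1.comap f, (hf.prodMap hf) hE.2.1, fun a => (hE.2.2 (f a)).preimage hinj.injOn⟩

lemma Hyperfinite.comap {E : X → X → Prop} (hE : Hyperfinite E) {f : Y → X} (hf : Measurable f)
    (hinj : Injective f) : Hyperfinite fun a b => E (f a) (f b) :=
  let ⟨F, hF, hmono, hEF⟩ := hE
  ⟨fun i a b => F i (f a) (f b), fun i => (hF i).comap hf hinj, fun i _ _ => hmono i _ _,
    fun _ _ => hEF _ _⟩

lemma isFiniteBorelEquivalence_forall_ge {F : ℕ → X → X → Prop}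
    (hF : ∀ n, IsFiniteBorelEquivalence (F n)) (m : ℕ) :
    IsFiniteBorelEquivalence fun x y => ∀ n ≥ m, F n x y := by
  refine ⟨⟨fun x n _ => (hF n).1.refl x, fun h n hn => (hF n).1.symm (h n hn),
    fun h h' n hn => (hF n).1.trans (h n hn) (h' n hn)⟩, ?_,
    fun x => ((hF m).2.2 x).subset fun y hy => hy m le_rfl⟩
  simp only [Set.ofPred_forall]
  exact .iInter fun n => .iInter fun _ => (hF n).2.1

lemma hyperfinite_of_iff_eventually {E : X → X → Prop} {F : ℕ → X → X → Prop}
    (hF : ∀ n, IsFiniteBorelEquivalence (F n)) (hEF : ∀ x y, E x y ↔ ∀ᶠ n in atTop, F n x y) :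
    Hyperfinite E :=
  ⟨fun m x y => ∀ n ≥ m, F n x y, isFiniteBorelEquivalence_forall_ge hF,
    fun m _ _ h n hn => h n (m.le_succ.trans hn), fun x y => (hEF x y).trans eventually_atTop⟩

lemma sFinite_comap {μ : Measure X} [SFinite μ] {f : Y → X} (hf : MeasurableEmbedding f) :
    SFinite (μ.comap f) :=
  inferInstanceAs (SFinite (Kernel.comapRight (Kernel.const Unit μ) hf ()))

lemma muHyperfinite_of_muHyperfinite_restrict {E : X → X → Prop} {μ : Measure X} {A : Set X}
    (hA : MeasurableSet A) (hμA : μ Aᶜ = 0)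
    (h : MuHyperfinite (fun a b : A => E a b) (μ.comap Subtype.val)) : MuHyperfinite E μ := by
  obtain ⟨B, hB, hμB, hBE⟩ := h
  refine ⟨Subtype.val '' B, hA.subtype_image hB, ?_, ?_⟩
  · rw [comap_subtype_coe_apply hA] at hμB
    refine measure_mono_null (fun x hx => ?_) (measure_union_null hμA hμB)
    by_cases hxA : x ∈ A
    · exact .inr ⟨⟨x, hxA⟩, fun hxB => hx ⟨_, hxB, rfl⟩, rfl⟩
    · exact .inl hxA
  · have hmem : ∀ a : (Subtype.val '' B : Set X), ∃ h : (a : X) ∈ A, ⟨a, h⟩ ∈ B := by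
      rintro ⟨_, b, hb, rfl⟩
      exact ⟨b.2, hb⟩
    let f (a : (Subtype.val '' B : Set X)) : B := ⟨⟨a, (hmem a).1⟩, (hmem a).2⟩
    have hf : Measurable f := measurable_subtype_coe.subtype_mk.subtype_mk
    exact hBE.comap hf fun a b hab => Subtype.ext (congrArg (fun z : B => (z : X)) hab)

/-- The equivalence relation identifying two points of `Z` if they lie in the same fibre of `s`,
and leaving the points outside of `Z` alone. -/
def fibreRel (s : X → Y) (Z : Set X) (x y : X) : Prop := x = y ∨ x ∈ Z ∧ y ∈ Z ∧ s x = s y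

lemma isFiniteBorelEquivalence_fibreRel [MeasurableEq X] [MeasurableEq Y] {s : X → Y}
    (hs : Measurable s) {Z : Set X} (hZ : MeasurableSet Z)
    (hfin : ∀ z, (s ⁻¹' {z} ∩ Z).Finite) : IsFiniteBorelEquivalence (fibreRel s Z) := by
  refine ⟨⟨fun x => .inl rfl, ?_, ?_⟩, ?_, fun x => ?_⟩
  · rintro x y (rfl | ⟨hx, hy, hxy⟩)
    exacts [.inl rfl, .inr ⟨hy, hx, hxy.symm⟩]
  · rintro x y z (rfl | ⟨hx, hy, hxy⟩) (rfl | ⟨hy', hz, hyz⟩)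
    exacts [.inl rfl, .inr ⟨hy', hz, hyz⟩, .inr ⟨hx, hy, hxy⟩, .inr ⟨hx, hz, hxy.trans hyz⟩]
  · exact (measurableSet_eq_fun measurable_fst measurable_snd).union
      ((measurable_fst hZ).inter ((measurable_snd hZ).inter
        (measurableSet_eq_fun (hs.comp measurable_fst) (hs.comp measurable_snd))))
  · refine ((hfin (s x)).insert x).subset ?_
    rintro y (rfl | ⟨-, hy, hxy⟩)
    exacts [.inl rfl, .inr ⟨hxy.symm, hy⟩]

end FiniteBorelEquivalences

section Approximation

variable {X : Type*} [MeasurableSpace X] {E : X → X → Prop}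

lemma exists_lintegral_lt_of_eventually_eventually_lt {Ω : Type*} [MeasurableSpace Ω]
    {ν : Measure Ω} [IsFiniteMeasure ν] {D : ℕ → ℕ → Ω → ℝ≥0∞} (hD : ∀ i j, Measurable (D i j))
    {C : ℝ≥0∞} (hC : C ≠ ∞) (hDC : ∀ i j ω, D i j ω ≤ C)
    (h : ∀ᵐ ω ∂ν, ∀ ε ≠ 0, ∀ᶠ i in atTop, ∀ᶠ j in atTop, D i j ω < ε) {ε : ℝ≥0∞} (hε : ε ≠ 0) :
    ∃ i j, ∫⁻ ω, D i j ω ∂ν < ε := by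
  have hfin : ∫⁻ _, C ∂ν ≠ ∞ := by rw [lintegral_const]; finiteness
  let L : ℕ → Ω → ℝ≥0∞ := fun i ω => limsup (fun j => D i j ω) atTop
  have hL0 : ∀ᵐ ω ∂ν, Tendsto (fun i => L i ω) atTop (𝓝 0) := h.mono fun ω hω =>
    ENNReal.tendsto_nhds_zero.2 fun δ hδ => (hω δ hδ.ne').mono fun i hi =>
      limsup_le_of_le (h := hi.mono fun _ => le_of_lt)
  have hlim := tendsto_lintegral_of_dominated_convergence (fun _ => C)
    (fun i => .limsup (hD i)) (fun i => .of_forall fun ω => limsup_le_of_le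
      (h := .of_forall fun j => hDC i j ω)) hfin hL0
  rw [lintegral_zero] at hlim
  obtain ⟨i, hi⟩ := (hlim.eventually (gt_mem_nhds (pos_iff_ne_zero.2 hε))).exists
  have hlimsup : limsup (fun j => ∫⁻ ω, D i j ω ∂ν) atTop ≤ ∫⁻ ω, L i ω ∂ν :=
    limsup_lintegral_le (fun _ => C) (hD i) (fun j => .of_forall (hDC i j)) hfin
  exact ⟨i, (eventually_lt_of_limsup_lt (hlimsup.trans_lt hi)).exists⟩

lemma exists_pmf_of_borel2Amenable (h : Borel2Amenable E) :
    ∃ q : ℕ → ℕ → X → PMF X, (∀ i j, Measurable fun z : X × X => q i j z.1 z.2) ∧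
      (∀ i j x, ∀ y ∈ (q i j x).support, E x y) ∧
      ∀ x y, E x y → ∀ ε ≠ 0, ∀ᶠ i in atTop, ∀ᶠ j in atTop, tvDist (q i j x) (q i j y) < ε := by
  obtain ⟨p, hp, hpm, hpE⟩ := h
  have hsum : ∀ i j x, HasSum (fun y => ENNReal.ofReal (p i j x y)) 1 := fun i j x => by
    obtain ⟨hp0, -, hp1⟩ := hp i j x
    rw [ENNReal.summable.hasSum_iff, ← ENNReal.ofReal_tsum_of_nonneg hp0 hp1.summable, hp1.tsum_eq,
      ENNReal.ofReal_one]
  refine ⟨fun i j x => ⟨_, hsum i j x⟩, fun i j => (hpm i j).ennreal_ofReal,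
    fun i j x y hy => (hp i j x).2.1 y fun h0 => ?_, fun x y hxy ε hε => ?_⟩
  · exact ((PMF.mem_support_iff _ y).1 hy) (by simp [DFunLike.coe, h0])
  · obtain ⟨δ, hδ0, hδ⟩ := ENNReal.lt_iff_exists_nnreal_btwn.1 (pos_iff_ne_zero.2 hε)
    refine (hpE x y hxy δ (by simpa using hδ0)).mono fun i hi => hi.mono fun j hj => ?_
    calc tvDist _ _ ≤ ENNReal.ofReal (l1dist (p i j x) (p i j y)) :=
          tvDist_le_ofReal_l1dist (hp i j x).2.2.summable (hp i j y).2.2.summable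
            (fun _ => rfl) fun _ => rfl
      _ ≤ ENNReal.ofReal δ := ENNReal.ofReal_le_ofReal hj.le
      _ = δ := ENNReal.ofReal_coe_nnreal
      _ < ε := hδ

variable [StandardBorelSpace X]

lemma exists_isFiniteBorelEquivalence_measure_not_le (hE : Equivalence E)
    (hcount : ∀ x, {y | E x y}.Countable) {q : X → PMF X}
    (hq : Measurable fun z : X × X => q z.1 z.2) (hqE : ∀ x, ∀ y ∈ (q x).support, E x y)
    (ν : Measure (X × X)) [IsFiniteMeasure ν] {ε : ℝ≥0∞} (hε : ε ≠ 0) :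
    ∃ F, IsFiniteBorelEquivalence F ∧ (∀ x y, F x y → E x y) ∧
      ν {z | ¬ F z.1 z.2} ≤ 2 * ∫⁻ z, tvDist (q z.1) (q z.2) ∂ν + ε := by
  obtain ⟨s, hs, hsq, hsν⟩ := exists_measurable_rounding_of_pmf hq ν (ENNReal.half_pos hε).ne'
  have hsE : ∀ x, E x (s x) := fun x => by
    rcases hsq x with h | h
    exacts [h.symm ▸ hE.refl x, hqE x _ h]
  have hfibre : ∀ x y, s x = s y → E x y := fun x y h => hE.trans (hsE x) (h ▸ hE.symm (hsE y))
  obtain ⟨Z, hZ, hνZ, hfin⟩ := exists_measurableSet_finite_fibres hs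
    (fun z => (hcount z).mono fun x (hx : s x = z) => hx ▸ hE.symm (hsE x)) (ν.fst + ν.snd)
    (ENNReal.half_pos hε).ne'
  refine ⟨fibreRel s Z, isFiniteBorelEquivalence_fibreRel hs hZ hfin, ?_, ?_⟩
  · rintro x y (rfl | ⟨-, -, h⟩)
    exacts [hE.refl x, hfibre x y h]
  have hsub : {z : X × X | ¬ fibreRel s Z z.1 z.2} ⊆
      {z | s z.1 ≠ s z.2} ∪ (Prod.fst ⁻¹' Zᶜ ∪ Prod.snd ⁻¹' Zᶜ) := by
    intro z hz
    simp only [fibreRel, Set.mem_ofPred_eq, Set.mem_union, Set.mem_preimage,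
      Set.mem_compl_iff] at hz ⊢
    tauto
  calc ν {z | ¬ fibreRel s Z z.1 z.2}
      ≤ ν {z | s z.1 ≠ s z.2} + (ν (Prod.fst ⁻¹' Zᶜ) + ν (Prod.snd ⁻¹' Zᶜ)) := by
        refine (measure_mono hsub).trans ((measure_union_le _ _).trans ?_)
        gcongr
        exact measure_union_le _ _
    _ = ν {z | s z.1 ≠ s z.2} + (ν.fst + ν.snd) Zᶜ := by
        rw [Measure.add_apply, Measure.fst_apply hZ.compl, Measure.snd_apply hZ.compl]
    _ ≤ 2 * ∫⁻ z, tvDist (q z.1) (q z.2) ∂ν + ε / 2 + ε / 2 := add_le_add hsν hνZ.le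
    _ = 2 * ∫⁻ z, tvDist (q z.1) (q z.2) ∂ν + ε := by rw [add_assoc, ENNReal.add_halves]

lemma exists_seq_ae_eventually_of_borel2Amenable (hE : Equivalence E)
    (hcount : ∀ x, {y | E x y}.Countable) (h : Borel2Amenable E) (ν : Measure (X × X))
    [IsFiniteMeasure ν] (hν : ∀ᵐ z ∂ν, E z.1 z.2) :
    ∃ F : ℕ → X → X → Prop, (∀ n, IsFiniteBorelEquivalence (F n)) ∧
      (∀ n x y, F n x y → E x y) ∧ ∀ᵐ z ∂ν, ∀ᶠ n in atTop, F n z.1 z.2 := by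
  obtain ⟨q, hq, hqE, hqlim⟩ := exists_pmf_of_borel2Amenable h
  have happrox : ∀ ε : ℝ≥0∞, ε ≠ 0 → ∃ F, IsFiniteBorelEquivalence F ∧ (∀ x y, F x y → E x y) ∧
      ν {z | ¬ F z.1 z.2} ≤ 2 * ε + ε := fun ε hε => by
    obtain ⟨i, j, hij⟩ := exists_lintegral_lt_of_eventually_eventually_lt
      (D := fun i j z => tvDist (q i j z.1) (q i j z.2))
      (fun i j => measurable_tvDist (p := fun z : X × X => q i j z.1) (q := fun z => q i j z.2)
        ((hq i j).comp (by fun_prop : Measurable fun w : (X × X) × X => (w.1.1, w.2)))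
        ((hq i j).comp (by fun_prop : Measurable fun w : (X × X) × X => (w.1.2, w.2))))
      ENNReal.one_ne_top (fun i j z => tvDist_le_one _ _) (hν.mono fun z hz => hqlim z.1 z.2 hz) hε
    obtain ⟨F, hF, hFE, hFν⟩ :=
      exists_isFiniteBorelEquivalence_measure_not_le hE hcount (hq i j) (hqE i j) ν hε
    exact ⟨F, hF, hFE, hFν.trans (by gcongr)⟩
  choose F hF hFE hFν using fun n : ℕ => happrox (2⁻¹ ^ n) (by simp)
  refine ⟨F, hF, hFE, ?_⟩
  have hsum : ∑' n, ν {z | ¬ F n z.1 z.2} ≠ ∞ := by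
    refine ne_top_of_le_ne_top ?_ (ENNReal.tsum_le_tsum hFν)
    rw [ENNReal.tsum_add, ENNReal.tsum_mul_left, ENNReal.tsum_geometric, ENNReal.one_sub_inv_two,
      inv_inv]
    finiteness
  simpa using ae_eventually_notMem hsum

lemma muHyperfinite_of_borel2Amenable (hE : Equivalence E) (hcount : ∀ x, {y | E x y}.Countable)
    (h : Borel2Amenable E) (μ : Measure X) [SFinite μ] : MuHyperfinite E μ := by
  obtain ⟨q, hq, hqE, hqlim⟩ := exists_pmf_of_borel2Amenable h
  let ν : Measure (X × X) := .sum fun n : ℕ × ℕ => μ ⊗ₘ pmfKernel (q n.1 n.2) (hq n.1 n.2)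
  have hνE : ∀ᵐ z ∂ν.toFinite, E z.1 z.2 := by
    rw [ae_toFinite]
    exact Measure.ae_sum_iff.2 fun n =>
      (ae_compProd_pmfKernel_mem_support (hq _ _) μ).mono fun z => hqE _ _ z.1 z.2
  obtain ⟨F, hF, hFE, hFν⟩ := exists_seq_ae_eventually_of_borel2Amenable hE hcount h _ hνE
  rw [ae_toFinite] at hFν
  have hlink : ∀ᵐ x ∂μ, ∀ i j, ∀ y ∈ (q i j x).support, ∀ᶠ n in atTop, F n x y := by
    simp only [ae_all_iff]
    exact fun i j => (Measure.ae_ae_of_ae_compProd (Measure.ae_sum_iff.1 hFν (i, j))).mono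
      fun x hx => ae_toMeasure_iff.1 hx
  obtain ⟨N, hN, hNmeas, hμN⟩ := exists_measurable_superset_of_null (ae_iff.1 hlink)
  have hNlink : ∀ x ∉ N, ∀ i j, ∀ y ∈ (q i j x).support, ∀ᶠ n in atTop, F n x y :=
    fun x hx => by_contra fun h => hx (hN h)
  refine ⟨Nᶜ, hNmeas.compl, by rwa [compl_compl], hyperfinite_of_iff_eventually
    (fun n => (hF n).comap measurable_subtype_coe Subtype.val_injective) fun x y => ⟨fun hxy => ?_,
      fun hxy => hxy.exists.elim fun n => hFE n x y⟩⟩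
  obtain ⟨i, hi⟩ := (hqlim x y hxy 1 one_ne_zero).exists
  obtain ⟨j, hij⟩ := hi.exists
  obtain ⟨z, hzx, hzy⟩ := exists_mem_support_of_tvDist_lt_one hij
  filter_upwards [hNlink x x.2 i j z hzx, hNlink y y.2 i j z hzy] with n hnx hny
  exact (hF n).1.trans hnx ((hF n).1.symm hny)

end Approximation

theorem measure_hyperfinite_of_two_amenable_general {X : Type*} [MeasurableSpace X]
    [StandardBorelSpace X] {E : X → X → Prop} (hE : Equivalence E)
    (hcount : ∀ x, {y | E x y}.Countable) {μ : Measure X} [SFinite μ] (h : Mu2Amenable E μ) :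
    MuHyperfinite E μ := by
  obtain ⟨A, hA, hμA, hAE⟩ := h
  have := hA.standardBorel
  have := sFinite_comap (μ := μ) (.subtype_coe hA)
  have hEA : Equivalence fun a b : A => E a b := hE.comap Subtype.val
  have hcountA : ∀ a : A, {b : A | E a b}.Countable := fun a =>
    (hcount a).preimage Subtype.val_injective
  exact muHyperfinite_of_muHyperfinite_restrict hA hμA <|
    muHyperfinite_of_borel2Amenable hEA hcountA hAE _

/-! ### STATEMENT 5 -/

theorem measure_hyperfinite_of_two_amenable {X : Type*} [MeasurableSpace X]
    [StandardBorelSpace X] (E : X → X → Prop) (hE : IsCBER E)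
    (μ : Measure X) [IsProbabilityMeasure μ] :
    (Mu2Amenable E μ → MuHyperfinite E μ) ∧
    (Borel2Amenable E → MeasureHyperfinite E) :=
  ⟨measure_hyperfinite_of_two_amenable_general hE.1 hE.2.2,
    fun h ν _ => muHyperfinite_of_borel2Amenable hE.1 hE.2.2 h ν⟩
end

section
/- Let G be a countable group, let G ↷ X be a Borel action generating a CBER E = E_G^X on a standard Borel space X, let μ be a Borel probability measure on X, and let (p_{i,j})_{i,j∈ℕ} be Borel assignments of probability measures p_{i,j}^x on [x]_E such that for μ-almost every x, for every g ∈ G and every ε > 0, for all but finitely many i and all but finitely many j one has ‖p_{i,j}^x − p_{i,j}^{gx}‖₁ < ε. Then there exists a function f : ℕ → ℕ such that for μ-almost every x, for every g ∈ G and every ε > 0, for all but finitely many i, for all j ≥ f(i), ‖p_{i,j}^x − p_{i,j}^{gx}‖₁ < ε. Consequently (p_{i,f(i)})_{i∈ℕ} witnesses μ-amenability of E. -/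
open MeasureTheory Function Filter

/-! ### STATEMENT 6 -/

/-!
Apply the Borel–Cantelli lemma on `X × G × ℕ`, where the point `(x, g, k)` stands for the inequality
`‖p i j x - p i j (g • x)‖₁ < 1 / (k + 1)`. For a finite measure with the same null sets as the
product of `μ` with counting measure, choose `f i` so that the points at which the inequality holds
for all large `j`, but not for all `j ≥ f i`, have measure less than `ε i`, where `∑ ε i < ∞`.
-/

section OrbitSums

open Set

variable {ι X Y : Type*}

/-- The indices at which a family `φ` indexed by a well-order takes a value for the first time.
They enumerate `range φ` without repetition, and so turn sums over a countable orbit into sums over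
a fixed index set. -/
def firstIndices [LT ι] (φ : ι → Y) : Set ι :=
  {a | ∀ b < a, φ b ≠ φ a}

lemma injOn_firstIndices [LinearOrder ι] (φ : ι → Y) : InjOn φ (firstIndices φ) := by
  intro a ha b hb hab
  rcases lt_trichotomy a b with hlt | heq | hgt
  · exact absurd hab (hb a hlt)
  · exact heq
  · exact absurd hab.symm (ha b hgt)

lemma image_firstIndices [LT ι] [WellFoundedLT ι] (φ : ι → Y) :
    φ '' firstIndices φ = range φ := by
  refine (image_subset_range _ _).antisymm ?_
  rintro _ ⟨a, rfl⟩
  obtain ⟨b, hb, hmin⟩ := wellFounded_lt.has_min {b | φ b = φ a} ⟨a, rfl⟩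
  exact ⟨b, fun c hcb hc => hmin c (hc.trans hb) hcb, hb⟩

lemma tsum_eq_tsum_indicator_firstIndices [LinearOrder ι] [WellFoundedLT ι] {M : Type*}
    [AddCommMonoid M] [TopologicalSpace M] {φ : ι → Y} {f : Y → M} (hf : support f ⊆ range φ) :
    ∑' y, f y = ∑' a, (firstIndices φ).indicator (f ∘ φ) a :=
  calc
    ∑' y, f y = ∑' y : φ '' firstIndices φ, f y :=
      (tsum_subtype_eq_of_support_subset (hf.trans (image_firstIndices φ).ge)).symm
    _ = ∑' a : firstIndices φ, f (φ a) := tsum_image f (injOn_firstIndices φ)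
    _ = ∑' a, (firstIndices φ).indicator (f ∘ φ) a := tsum_subtype _ (f ∘ φ)

variable [MeasurableSpace X] [MeasurableSpace Y] [MeasurableEq Y] [Countable ι] {φ : ι → X → Y}

lemma measurableSet_mem_firstIndices [LT ι] (hφ : ∀ a, Measurable (φ a)) (a : ι) :
    MeasurableSet {x | a ∈ firstIndices (φ · x)} := by
  change MeasurableSet {x | ∀ b < a, φ b x ≠ φ a x}
  rw [ofPred_forall]
  exact .iInter fun b => (MeasurableSet.const (b < a)).imp
    (measurableSet_eq_fun (hφ b) (hφ a)).compl

lemma measurable_tsum_of_support_subset_range {M : Type*} [AddCommMonoid M] [TopologicalSpace M]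
    [TopologicalSpace.IsCompletelyPseudoMetrizableSpace M] [SecondCountableTopology M]
    [MeasurableSpace M] [BorelSpace M] [MeasurableAdd₂ M] {F : X → Y → M}
    (hF : Measurable (uncurry F)) (hφ : ∀ a, Measurable (φ a))
    (hsupp : ∀ x, support (F x) ⊆ range (φ · x)) :
    Measurable fun x => ∑' y, F x y := by
  obtain ⟨_, _⟩ := exists_wellFoundedLT ι
  simp_rw [tsum_eq_tsum_indicator_firstIndices (hsupp _)]
  refine .tsum fun a => ?_
  exact (hF.comp (measurable_id.prodMk (hφ a))).indicator (measurableSet_mem_firstIndices hφ a)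

lemma measurable_l1dist {κ : Type*} [Countable κ] {ψ : κ → X → Y} {p q : X → Y → ℝ}
    (hp : Measurable (uncurry p)) (hq : Measurable (uncurry q))
    (hφ : ∀ a, Measurable (φ a)) (hψ : ∀ b, Measurable (ψ b))
    (hpφ : ∀ x, support (p x) ⊆ range (φ · x)) (hqψ : ∀ x, support (q x) ⊆ range (ψ · x)) :
    Measurable fun x => l1dist (p x) (q x) := by
  refine measurable_tsum_of_support_subset_range (φ := Sum.elim φ ψ)
    (measurable_abs.comp (hp.sub hq)) (Sum.forall.2 ⟨hφ, hψ⟩) fun x y hy => ?_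
  have hpq : y ∈ support (p x) ∪ support (q x) :=
    support_sub (p x) (q x) (abs_ne_zero.1 hy)
  rcases hpq with h | h
  · obtain ⟨a, ha⟩ := hpφ x h
    exact ⟨.inl a, ha⟩
  · obtain ⟨b, hb⟩ := hqψ x h
    exact ⟨.inr b, hb⟩

lemma measurable_l1dist_smul {G : Type*} [MeasurableEq X] [Countable G] [SMul G X]
    (hsmul : ∀ g : G, Measurable fun x : X => g • x)
    {p : X → X → ℝ} (hp : Measurable (uncurry p))
    (hsupp : ∀ x, support (p x) ⊆ range fun h : G => h • x) (g : G) :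
    Measurable fun x => l1dist (p x) (p (g • x)) :=
  measurable_l1dist hp
    (hp.comp (((hsmul g).comp measurable_fst).prodMk measurable_snd))
    hsmul (fun h => (hsmul h).comp (hsmul g)) hsupp fun x => hsupp (g • x)

end OrbitSums

section Diagonalization

open Set
open scoped ENNReal

variable {X ι : Type*} [MeasurableSpace X] {μ : Measure X} [Countable ι]

lemma exists_measure_iUnion_diff_lt [Preorder ι] [IsDirectedOrder ι] [Nonempty ι]
    {s : ι → Set X} (hs : ∀ n, MeasurableSet (s n)) (hmono : Monotone s)
    (hfin : μ (⋃ n, s n) ≠ ∞) {ε : ℝ≥0∞} (hε : 0 < ε) :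
    ∃ n, μ ((⋃ m, s m) \ s n) < ε := by
  have hlim := tendsto_measure_iInter_atTop (μ := μ) (s := fun n => (⋃ m, s m) \ s n)
    (fun n => ((MeasurableSet.iUnion hs).diff (hs n)).nullMeasurableSet)
    (fun _ _ hmn => sdiff_subset_sdiff_right (hmono hmn))
    ⟨Classical.arbitrary ι, measure_ne_top_of_subset sdiff_subset hfin⟩
  rw [← sdiff_iUnion, Set.sdiff_self, measure_empty] at hlim
  exact (hlim.eventually_lt_const hε).exists

lemma exists_seq_ae_eventually_forall_ge_mem [SFinite μ] {P : ℕ → ℕ → Set X}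
    (hP : ∀ i j, MeasurableSet (P i j)) (hae : ∀ᵐ x ∂μ, ∀ᶠ i in atTop, ∀ᶠ j in atTop, x ∈ P i j) :
    ∃ f : ℕ → ℕ, ∀ᵐ x ∂μ, ∀ᶠ i in atTop, ∀ j ≥ f i, x ∈ P i j := by
  rw [← ae_toFinite] at hae ⊢
  let S : ℕ → ℕ → Set X := fun i n => ⋂ j ≥ n, P i j
  have hS : ∀ i n, MeasurableSet (S i n) := fun i n => .iInter fun j => .iInter fun _ => hP i j
  have hmono : ∀ i, Monotone (S i) := fun i m n hmn =>
    biInter_subset_biInter_left fun j hj => le_trans hmn hj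
  obtain ⟨ε, hεpos, hεsum⟩ := ENNReal.exists_pos_sum_of_countable' one_ne_zero ℕ
  choose f hf using fun i =>
    exists_measure_iUnion_diff_lt (hS i) (hmono i) (measure_ne_top μ.toFinite _) (hεpos i)
  have hsum : ∑' i, μ.toFinite ((⋃ n, S i n) \ S i (f i)) ≠ ∞ :=
    ((ENNReal.tsum_le_tsum fun i => (hf i).le).trans_lt (hεsum.trans ENNReal.one_lt_top)).ne
  refine ⟨f, ?_⟩
  filter_upwards [hae, ae_eventually_notMem hsum] with x hx hxf
  filter_upwards [hx, hxf] with i hi hif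
  have hxS : x ∈ ⋃ n, S i n := by simpa [S] using hi
  simpa [S] using not_not.1 fun hnot => hif ⟨hxS, hnot⟩

lemma exists_seq_ae_forall_eventually_forall_ge_mem [SFinite μ] {P : ι → ℕ → ℕ → Set X}
    (hP : ∀ a i j, MeasurableSet (P a i j))
    (hae : ∀ᵐ x ∂μ, ∀ a, ∀ᶠ i in atTop, ∀ᶠ j in atTop, x ∈ P a i j) :
    ∃ f : ℕ → ℕ, ∀ᵐ x ∂μ, ∀ a, ∀ᶠ i in atTop, ∀ j ≥ f i, x ∈ P a i j := by
  let _ : MeasurableSpace ι := ⊤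
  let Q : ℕ → ℕ → Set (X × ι) := fun i j => {z | z.1 ∈ P z.2 i j}
  have hQ : ∀ i j, MeasurableSet (Q i j) := fun i j =>
    measurableSet_setOfPred.2 <| measurable_from_prod_countable_left fun a =>
      measurableSet_setOfPred.1 (hP a i j)
  have hQev : MeasurableSet {z | ∀ᶠ i in atTop, ∀ᶠ j in atTop, z ∈ Q i j} := by
    simp only [eventually_atTop]
    measurability
  have hQae : ∀ᵐ z ∂μ.prod Measure.count, ∀ᶠ i in atTop, ∀ᶠ j in atTop, z ∈ Q i j :=
    (Measure.ae_prod_iff_ae_ae hQev).2 (hae.mono fun _ hx => Measure.ae_count_iff.2 hx)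
  obtain ⟨f, hf⟩ := exists_seq_ae_eventually_forall_ge_mem hQ hQae
  exact ⟨f, (Measure.ae_ae_of_ae_prod hf).mono fun _ hx => Measure.ae_count_iff.1 hx⟩

lemma exists_seq_ae_eventually_forall_ge_lt [SFinite μ] {d : ι → ℕ → ℕ → X → ℝ}
    (hd : ∀ a i j, Measurable (d a i j))
    (hae : ∀ᵐ x ∂μ, ∀ a, ∀ ε : ℝ, 0 < ε → ∀ᶠ i in atTop, ∀ᶠ j in atTop, d a i j x < ε) :
    ∃ f : ℕ → ℕ, ∀ᵐ x ∂μ, ∀ a, ∀ ε : ℝ, 0 < ε →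
      ∀ᶠ i in atTop, ∀ j ≥ f i, d a i j x < ε := by
  obtain ⟨f, hf⟩ := exists_seq_ae_forall_eventually_forall_ge_mem (μ := μ)
    (P := fun (ak : ι × ℕ) i j => {x | d ak.1 i j x < 1 / ((ak.2 : ℝ) + 1)})
    (fun ak i j => measurableSet_lt (hd ak.1 i j) measurable_const)
    (hae.mono fun x hx ak => hx ak.1 _ Nat.one_div_pos_of_nat)
  refine ⟨f, hf.mono fun x hx a ε hε => ?_⟩
  obtain ⟨k, hk⟩ := exists_nat_one_div_lt hε
  exact (hx (a, k)).mono fun i hi j hj => (hi j hj).trans hk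

end Diagonalization

theorem diagonalization_of_two_amenability_witness_general
    {X : Type*} [MeasurableSpace X] [MeasurableEq X]
    {G : Type*} [Countable G] [SMul G X]
    (hBorel : ∀ g : G, Measurable fun x : X => g • x)
    (E : X → X → Prop) (hE : ∀ x y, E x y → ∃ g : G, g • x = y)
    (μ : Measure X) [SFinite μ]
    (p : ℕ → ℕ → X → X → ℝ)
    (hprob : ∀ i j x, IsProbOnClass E (p i j x) x)
    (hmeas : ∀ i j, Measurable fun q : X × X => p i j q.1 q.2)
    (hae : ∀ᵐ x ∂μ, ∀ g : G, ∀ ε : ℝ, 0 < ε →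
      ∀ᶠ i in atTop, ∀ᶠ j in atTop, l1dist (p i j x) (p i j (g • x)) < ε) :
    ∃ f : ℕ → ℕ,
      (∀ᵐ x ∂μ, ∀ g : G, ∀ ε : ℝ, 0 < ε →
        ∀ᶠ i in atTop, ∀ j ≥ f i, l1dist (p i j x) (p i j (g • x)) < ε) ∧
      ∃ A : Set X, MeasurableSet A ∧ μ Aᶜ = 0 ∧
        ∀ x ∈ A, ∀ y, E x y → ∀ ε : ℝ, 0 < ε →
          ∀ᶠ i in atTop, l1dist (p i (f i) x) (p i (f i) y) < ε := by
  have hsupp : ∀ i j x, support (p i j x) ⊆ Set.range fun g : G => g • x := fun i j x y hy =>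
    hE x y ((hprob i j x).2.1 y hy)
  obtain ⟨f, hf⟩ := exists_seq_ae_eventually_forall_ge_lt
    (fun g i j => measurable_l1dist_smul hBorel (hmeas i j) (hsupp i j) g) hae
  obtain ⟨A, hAμ, hA, hfA⟩ := hf.exists_measurable_mem
  refine ⟨f, hf, A, hA, hAμ, fun x hx y hxy ε hε => ?_⟩
  obtain ⟨g, rfl⟩ := hE x y hxy
  exact (hfA x hx g ε hε).mono fun i hi => hi (f i) le_rfl

theorem diagonalization_of_two_amenability_witness
    {X : Type*} [MeasurableSpace X] [StandardBorelSpace X]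
    {G : Type*} [Group G] [Countable G] [MulAction G X]
    (hBorel : ∀ g : G, Measurable fun x : X => g • x)
    (E : X → X → Prop) (hEdef : ∀ x y, E x y ↔ ∃ g : G, g • x = y)
    (μ : Measure X) [IsProbabilityMeasure μ]
    (p : ℕ → ℕ → X → X → ℝ)
    (hprob : ∀ i j x, IsProbOnClass E (p i j x) x)
    (hmeas : ∀ i j, Measurable fun q : X × X => p i j q.1 q.2)
    (hae : ∀ᵐ x ∂μ, ∀ g : G, ∀ ε : ℝ, 0 < ε →
      ∀ᶠ i in atTop, ∀ᶠ j in atTop, l1dist (p i j x) (p i j (g • x)) < ε) :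
    ∃ f : ℕ → ℕ,
      (∀ᵐ x ∂μ, ∀ g : G, ∀ ε : ℝ, 0 < ε →
        ∀ᶠ i in atTop, ∀ j ≥ f i, l1dist (p i j x) (p i j (g • x)) < ε) ∧
      ∃ A : Set X, MeasurableSet A ∧ μ Aᶜ = 0 ∧
        ∀ x ∈ A, ∀ y ∈ A, E x y → ∀ ε : ℝ, 0 < ε →
          ∀ᶠ i in atTop, l1dist (p i (f i) x) (p i (f i) y) < ε := by
  obtain ⟨f, hf, A, hA, hAμ, hfA⟩ := diagonalization_of_two_amenability_witness_general hBorel E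
    (fun x y => (hEdef x y).1) μ p hprob hmeas hae
  exact ⟨f, hf, A, hA, hAμ, fun x hx y _ => hfA x hx y⟩
end

section
/- Let G be a countable group and let G ↷ X be a Borel action on a standard Borel space. If the stabilizer Stab(x) is uniformly coamenable in G for every x ∈ X, then the orbit equivalence relation E_G^X is Borel amenable. -/
open MeasureTheory Function Filter

/-!
If `p` is a Reiter function for `G ↷ G/Stab(x)`, then pushing `p` forward along orbit maps gives
almost invariant measures on the orbit of `x`. Two points remain: choosing `p` in a Borel way and
constantly along each orbit. Since `ℓ¹(G)` is separable, `p` may be taken from a fixed countable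
dense set of probability functions, and the first element of that set that works for `x` depends
only on the orbit of `x`, in a Borel way.
-/

section Separability

variable {ι : Type*}

theorem l1dist_eq_dist_lp (P Q : lp (fun _ : ι => ℝ) 1) : l1dist P Q = dist P Q := by
  have hnorm : ‖P - Q‖ = ∑' i, |(P - Q) i| := by
    simpa using lp.norm_eq_tsum_rpow (by simp) (P - Q)
  rw [dist_eq_norm, hnorm]
  rfl

variable [Countable ι]

theorem separableSpace_lp {E : ι → Type*} [∀ i, NormedAddCommGroup (E i)]
    [∀ i, NormedSpace ℝ (E i)] [∀ i, TopologicalSpace.SeparableSpace (E i)]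
    {p : ENNReal} [Fact (1 ≤ p)] (hp : p ≠ ⊤) :
    TopologicalSpace.SeparableSpace (lp E p) := by
  classical
  let A : Set (lp E p) := ⋃ i, Set.range (lp.single p i)
  have hA : TopologicalSpace.IsSeparable A := .iUnion fun i =>
    TopologicalSpace.isSeparable_range (lp.isometry_single i).continuous
  have hdense : closure (Submodule.span ℝ A : Set (lp E p)) = Set.univ :=
    Set.eq_univ_of_forall fun f => mem_closure_of_tendsto (lp.hasSum_single hp f) <|
      Eventually.of_forall fun s => Submodule.sum_mem _ fun i _ =>
        Submodule.subset_span <| Set.mem_iUnion_of_mem i ⟨f i, rfl⟩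
  exact TopologicalSpace.isSeparable_univ_iff.1 (hdense ▸ hA.span.closure)

theorem exists_seq_l1dist_lt {A : Set (ι → ℝ)} (hne : A.Nonempty) (hA : ∀ p ∈ A, Summable p) :
    ∃ d : ℕ → ι → ℝ, (∀ n, d n ∈ A) ∧ ∀ p ∈ A, ∀ δ > 0, ∃ n, l1dist p (d n) < δ := by
  have hmem (p : ι → ℝ) (hp : p ∈ A) : Memℓp p 1 := memℓp_gen (by simpa using (hA p hp).abs)
  let B : Set (lp (fun _ : ι => ℝ) 1) := {P | ⇑P ∈ A}
  have : Nonempty B := let ⟨p, hp⟩ := hne; ⟨⟨⟨p, hmem p hp⟩, hp⟩⟩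
  have := separableSpace_lp (E := fun _ : ι => ℝ) ENNReal.one_ne_top
  have := UniformSpace.secondCountable_of_separable (lp (fun _ : ι => ℝ) 1)
  refine ⟨fun n => ⇑(TopologicalSpace.denseSeq B n).1,
    fun n => (TopologicalSpace.denseSeq B n).2, fun p hp δ hδ => ?_⟩
  obtain ⟨n, hn⟩ :=
    (TopologicalSpace.denseRange_denseSeq B).exists_dist_lt ⟨⟨p, hmem p hp⟩, hp⟩ hδ
  exact ⟨n, (l1dist_eq_dist_lp _ _).trans_lt hn⟩

end Separability

section L1dist

variable {A : Type*} {p q r : A → ℝ}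

theorem support_abs_sub_subset (p q : A → ℝ) :
    (support fun a => |p a - q a|) ⊆ support p ∪ support q :=
  (support_comp_subset abs_zero _).trans (support_sub p q)

theorem l1dist_comm (p q : A → ℝ) : l1dist p q = l1dist q p :=
  tsum_congr fun a => abs_sub_comm (p a) (q a)

theorem l1dist_triangle (hp : Summable p) (hq : Summable q) (hr : Summable r) :
    l1dist p r ≤ l1dist p q + l1dist q r := by
  have hpq := (hp.sub hq).abs
  have hqr := (hq.sub hr).abs
  calc l1dist p r ≤ ∑' a, (|p a - q a| + |q a - r a|) :=
        (hp.sub hr).abs.tsum_le_tsum (fun a => abs_sub_le _ _ _) (hpq.add hqr)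
    _ = l1dist p q + l1dist q r := hpq.tsum_add hqr

end L1dist

section Push

variable {G X Y : Type*} [Group G] [MulAction G X] [MulAction G Y] {p q : G → ℝ}

theorem hasSum_pushMeasure {a : ℝ} (hp : HasSum p a) (x : X) : HasSum (pushMeasure p x) a :=
  hp.tsum_fiberwise fun g : G => g • x

theorem support_pushMeasure_subset_orbit (p : G → ℝ) (x : X) :
    support (pushMeasure p x) ⊆ MulAction.orbit G x := by
  intro y hy
  by_contra hxy
  have : IsEmpty {g : G // g • x = y} := ⟨fun g => hxy ⟨g.1, g.2⟩⟩
  exact hy tsum_empty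

theorem isProbOnClass_pushMeasure (hp : IsProbFun p) (x : X) :
    IsProbOnClass (fun x y : X => ∃ g : G, g • x = y) (pushMeasure p x) x :=
  ⟨fun _ => tsum_nonneg fun g => hp.1 g.1, fun _ hy => support_pushMeasure_subset_orbit p x hy,
    hasSum_pushMeasure hp.2 x⟩

theorem l1dist_pushMeasure_le (hp : Summable p) (hq : Summable q) (x : X) :
    l1dist (pushMeasure p x) (pushMeasure q x) ≤ l1dist p q := by
  have hpq := (hp.sub hq).abs
  have hpush := hasSum_pushMeasure hpq.hasSum x
  have hfiber (y : X) : |pushMeasure p x y - pushMeasure q x y| ≤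
      pushMeasure (fun g => |p g - q g|) x y :=
    calc |pushMeasure p x y - pushMeasure q x y|
        = |∑' g : {g : G // g • x = y}, (p g.1 - q g.1)| :=
          congrArg abs ((hp.subtype {g | g • x = y}).tsum_sub (hq.subtype {g | g • x = y})).symm
      _ ≤ pushMeasure (fun g => |p g - q g|) x y :=
          norm_tsum_le_tsum_norm (f := fun g : {g : G // g • x = y} => p g.1 - q g.1)
            (hpq.subtype _)
  calc l1dist (pushMeasure p x) (pushMeasure q x)
      ≤ ∑' y, pushMeasure (fun g => |p g - q g|) x y :=
        ((hasSum_pushMeasure hp.hasSum x).summable.sub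
          (hasSum_pushMeasure hq.hasSum x).summable).abs.tsum_le_tsum hfiber hpush.summable
    _ = l1dist p q := hpush.tsum_eq

theorem pushMeasure_map {f : Y →[G] X} (hf : Injective f) (p : G → ℝ) (y z : Y) :
    pushMeasure p (f y) (f z) = pushMeasure p y z := by
  have hfiber (g : G) : g • f y = f z ↔ g • y = z := by rw [← map_smul, hf.eq_iff]
  exact (Equiv.subtypeEquivRight hfiber).tsum_eq fun g : {g : G // g • y = z} => p g.1

theorem support_pushMeasure_map_subset_range (f : Y →[G] X) (p : G → ℝ) (y : Y) :
    support (pushMeasure p (f y)) ⊆ Set.range f := fun _ hx =>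
  let ⟨g, hg⟩ := support_pushMeasure_subset_orbit p (f y) hx
  ⟨g • y, (map_smul f g y).trans hg⟩

theorem l1dist_pushMeasure_map {f : Y →[G] X} (hf : Injective f) (p q : G → ℝ) (y z : Y) :
    l1dist (pushMeasure p (f y)) (pushMeasure q (f z)) =
      l1dist (pushMeasure p y) (pushMeasure q z) := by
  have hsupp : (support fun x => |pushMeasure p (f y) x - pushMeasure q (f z) x|) ⊆
      Set.range f :=
    (support_abs_sub_subset _ _).trans <| Set.union_subset
      (support_pushMeasure_map_subset_range f p y) (support_pushMeasure_map_subset_range f q z)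
  rw [l1dist, ← hf.tsum_eq hsupp]
  simp only [pushMeasure_map hf, l1dist]

end Push

section ReiterFunctions

variable {G X : Type*} [Group G] [MulAction G X] {S : Finset G} {ε : ℝ} {p q : G → ℝ}

theorem isProbFun_single {A : Type*} [DecidableEq A] (a : A) :
    IsProbFun (Pi.single a 1 : A → ℝ) :=
  ⟨fun b => (Pi.single_nonneg.2 zero_le_one : (0 : A → ℝ) ≤ Pi.single a 1) b, hasSum_pi_single a 1⟩

theorem IsReiterFun.of_l1dist_le {δ : ℝ} (hp : IsReiterFun X S ε p) (hq : IsProbFun q)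
    (hpq : l1dist p q ≤ δ) : IsReiterFun X S (ε + 2 * δ) q := by
  refine ⟨hq, fun s hs x => ?_⟩
  have hsum {r : G → ℝ} (hr : IsProbFun r) (y : X) : Summable (pushMeasure r y) :=
    (hasSum_pushMeasure hr.2 y).summable
  have hclose (y : X) : l1dist (pushMeasure p y) (pushMeasure q y) ≤ δ :=
    (l1dist_pushMeasure_le hp.1.2.summable hq.2.summable y).trans hpq
  calc l1dist (pushMeasure q x) (pushMeasure q (s • x))
      ≤ l1dist (pushMeasure q x) (pushMeasure p x) +
          l1dist (pushMeasure p x) (pushMeasure q (s • x)) :=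
        l1dist_triangle (hsum hq _) (hsum hp.1 _) (hsum hq _)
    _ ≤ l1dist (pushMeasure q x) (pushMeasure p x) +
          (l1dist (pushMeasure p x) (pushMeasure p (s • x)) +
            l1dist (pushMeasure p (s • x)) (pushMeasure q (s • x))) := by
        gcongr
        exact l1dist_triangle (hsum hp.1 _) (hsum hp.1 _) (hsum hq _)
    _ < δ + (ε + δ) := by
        rw [l1dist_comm (pushMeasure q x)]
        linarith [hclose x, hp.2 s hs x, hclose (s • x)]
    _ = ε + 2 * δ := by ring

theorem isReiterFun_quotient_stabilizer_iff {x : X} :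
    IsReiterFun (G ⧸ MulAction.stabilizer G x) S ε p ↔
      IsProbFun p ∧ ∀ s ∈ S, ∀ y ∈ MulAction.orbit G x,
        l1dist (pushMeasure p y) (pushMeasure p (s • y)) < ε := by
  let f : G ⧸ MulAction.stabilizer G x →[G] X :=
    ⟨MulAction.ofQuotientStabilizer G x, MulAction.ofQuotientStabilizer_smul G x⟩
  have hf : Injective f := MulAction.injective_ofQuotientStabilizer G x
  have hdist (s g : G) : l1dist (pushMeasure p (g • x)) (pushMeasure p (s • g • x)) =
      l1dist (pushMeasure p (g : G ⧸ MulAction.stabilizer G x))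
        (pushMeasure p (s • (g : G ⧸ MulAction.stabilizer G x))) := by
    rw [← l1dist_pushMeasure_map hf, map_smul]
    rfl
  simp only [IsReiterFun, MulAction.orbit, Set.forall_mem_range, hdist,
    QuotientGroup.mk_surjective.forall]

end ReiterFunctions

section Measurability

theorem measurable_tsum_of_support_subset_range_s7 {ι X Y : Type*} [Countable ι]
    [MeasurableSpace X] [MeasurableSpace Y] [MeasurableEq Y] {f : ι → X → Y} {F : X → Y → ℝ}
    (hf : ∀ i, Measurable (f i)) (hF : Measurable (uncurry F))
    (hsupp : ∀ x, support (F x) ⊆ Set.range fun i => f i x) :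
    Measurable fun x => ∑' y, F x y := by
  obtain ⟨e, he⟩ := exists_injective_nat ι
  -- Each value of `f · x` is counted once, at the first index where it occurs.
  let A (i : ι) : Set X := {x | ∀ j, e j < e i → f j x ≠ f i x}
  have hA (i : ι) : MeasurableSet (A i) := by
    simp only [A, Set.ofPred_forall]
    exact .iInter fun j => .iInter fun _ => (measurableSet_eq_fun (hf j) (hf i)).compl
  have hsum (x : X) : ∑' y, F x y = ∑' i, (A i).indicator (fun x => F x (f i x)) x := by
    have hinj : Injective fun i : {i // x ∈ A i} => f i x := fun i j hij =>
      Subtype.ext <| he <| le_antisymm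
        (not_lt.1 fun hlt => i.2 j hlt hij.symm) (not_lt.1 fun hlt => j.2 i hlt hij)
    have hrange : support (F x) ⊆ Set.range fun i : {i // x ∈ A i} => f i x := by
      intro y hy
      obtain ⟨i, rfl : f i x = y, hmin⟩ :=
        (measure e).wf.has_min {i | f i x = y} (hsupp x hy)
      exact ⟨⟨i, fun j hji hj => hmin j hj hji⟩, rfl⟩
    rw [← hinj.tsum_eq hrange]
    exact tsum_subtype {i | x ∈ A i} fun i => F x (f i x)
  simp only [hsum]
  exact Measurable.tsum fun i => (hF.comp (measurable_id.prodMk (hf i))).indicator (hA i)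

variable {G X : Type*} [Group G] [Countable G] [MulAction G X] [MeasurableSpace X]
  [MeasurableEq X]

theorem measurable_pushMeasure {p : X → G → ℝ} (hBorel : ∀ g : G, Measurable fun x : X => g • x)
    (hp : Measurable p) : Measurable fun z : X × X => pushMeasure (p z.1) z.1 z.2 := by
  have hpush (z : X × X) : pushMeasure (p z.1) z.1 z.2 =
      ∑' g : G, {z : X × X | g • z.1 = z.2}.indicator (fun z => p z.1 g) z :=
    tsum_subtype {g : G | g • z.1 = z.2} (p z.1)
  simp only [hpush]
  exact Measurable.tsum fun g =>
    (((measurable_pi_apply g).comp hp).comp measurable_fst).indicator <|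
      measurableSet_eq_fun ((hBorel g).comp measurable_fst) measurable_snd

theorem measurable_l1dist_pushMeasure_smul (hBorel : ∀ g : G, Measurable fun x : X => g • x)
    (p : G → ℝ) (s : G) :
    Measurable fun x : X => l1dist (pushMeasure p x) (pushMeasure p (s • x)) := by
  have hpush := measurable_pushMeasure hBorel (measurable_const (a := p))
  refine measurable_tsum_of_support_subset_range_s7 (f := fun (g : G) x => g • x) hBorel
    (hpush.sub (hpush.comp (((hBorel s).comp measurable_fst).prodMk measurable_snd))).abs
    fun x => ?_
  refine (support_abs_sub_subset _ _).trans <|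
    Set.union_subset (support_pushMeasure_subset_orbit p x) ?_
  exact (support_pushMeasure_subset_orbit p (s • x)).trans (MulAction.orbit_smul s x).subset

theorem measurableSet_isReiterFun_quotient_stabilizer
    (hBorel : ∀ g : G, Measurable fun x : X => g • x) (S : Finset G) (ε : ℝ) (p : G → ℝ) :
    MeasurableSet {x : X | IsReiterFun (G ⧸ MulAction.stabilizer G x) S ε p} := by
  simp only [isReiterFun_quotient_stabilizer_iff, MulAction.orbit, Set.forall_mem_range,
    Set.ofPred_and, Set.ofPred_forall]
  exact (MeasurableSet.const _).inter <| .iInter fun s => .iInter fun _ => .iInter fun g =>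
    measurableSet_lt ((measurable_l1dist_pushMeasure_smul hBorel p s).comp (hBorel g))
      measurable_const

theorem exists_measurable_invariant_isReiterFun
    (hBorel : ∀ g : G, Measurable fun x : X => g • x)
    (hstab : ∀ x : X, UniformlyCoamenable (MulAction.stabilizer G x))
    (S : Finset G) {ε : ℝ} (hε : 0 < ε) :
    ∃ p : X → G → ℝ, Measurable p ∧ (∀ (g : G) x, p (g • x) = p x) ∧
      ∀ x, IsReiterFun (G ⧸ MulAction.stabilizer G x) S ε (p x) := by
  classical
  obtain ⟨d, hd, hdense⟩ := exists_seq_l1dist_lt (A := {p : G → ℝ | IsProbFun p})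
    ⟨_, isProbFun_single 1⟩ fun p hp => hp.2.summable
  have hex (x : X) : ∃ n, IsReiterFun (G ⧸ MulAction.stabilizer G x) S ε (d n) := by
    obtain ⟨p, hp⟩ := hstab x S (ε / 2) (half_pos hε)
    obtain ⟨n, hn⟩ := hdense p hp.1 (ε / 4) (by positivity)
    have hreiter := hp.of_l1dist_le (hd n) hn.le
    exact ⟨n, by convert hreiter using 1; ring⟩
  refine ⟨fun x => d (Nat.find (hex x)), ?_, fun g x => ?_, fun x => Nat.find_spec (hex x)⟩
  · exact Measurable.find (fun n => measurable_const)
      (fun n => measurableSet_isReiterFun_quotient_stabilizer hBorel S ε (d n)) hex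
  · simp only [isReiterFun_quotient_stabilizer_iff, MulAction.orbit_smul]

end Measurability

theorem borel_amenable_of_uniformly_coamenable_stabilizers_general
    {X : Type*} [MeasurableSpace X] [MeasurableEq X]
    {G : Type*} [Group G] [Countable G] [MulAction G X]
    (hBorel : ∀ g : G, Measurable fun x : X => g • x)
    (hstab : ∀ x : X, UniformlyCoamenable (MulAction.stabilizer G x)) :
    BorelAmenable fun x y : X => ∃ g : G, g • x = y := by
  obtain ⟨S, hS⟩ := exists_seq_tendsto (atTop : Filter (Finset G))
  obtain ⟨δ, -, hδpos, hδ⟩ := exists_seq_strictAnti_tendsto (0 : ℝ)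
  choose p hpmeas hpinv hp using fun i =>
    exists_measurable_invariant_isReiterFun hBorel hstab (S i) (hδpos i)
  refine ⟨fun i x => pushMeasure (p i x) x, fun i x => isProbOnClass_pushMeasure (hp i x).1 x,
    fun i => measurable_pushMeasure hBorel (hpmeas i), ?_⟩
  rintro x _ ⟨g, rfl⟩ ε hε
  filter_upwards [hS.eventually_ge_atTop {g}, hδ.eventually_lt_const hε] with i hgi hδi
  have hreiter := (isReiterFun_quotient_stabilizer_iff.1 (hp i x)).2 g
    (Finset.singleton_subset_iff.1 hgi) x (MulAction.mem_orbit_self x)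
  rw [hpinv]
  exact hreiter.trans hδi

/-! ### STATEMENT 7 -/

theorem borel_amenable_of_uniformly_coamenable_stabilizers
    {X : Type*} [MeasurableSpace X] [StandardBorelSpace X]
    {G : Type*} [Group G] [Countable G] [MulAction G X]
    (hBorel : ∀ g : G, Measurable fun x : X => g • x)
    (hstab : ∀ x : X, UniformlyCoamenable (MulAction.stabilizer G x)) :
    BorelAmenable fun x y : X => ∃ g : G, g • x = y :=
  borel_amenable_of_uniformly_coamenable_stabilizers_general hBorel hstab
end

section
/- Let E be a CBER on a standard Borel space X, and let (A_n)_{n∈ℕ} be a cover of X by Borel sets. If each restriction E↾A_n is Borel amenable, then E is Borel amenable. -/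
open MeasureTheory Function Filter

/-!
By Lusin–Novikov uniformization, each Borel `A n` admits a Borel map sending every point `x` of its
saturation to a point of `A n` in the class of `x`. Through this map `x` borrows the measures of
`E↾A n`, so `E` is amenable on the saturation of `A n`. Saturations are invariant, hence letting `x`
use the first `n` whose saturation contains it gives the same `n` on the whole class.

Uniformization rests on writing a Borel set with countable fibers over `X` as a countable union of
Borel sets on which the projection is injective. If this fails, the sets that can be so written form
a proper σ-ideal. Novikov separation shows that a finite family of open sets meeting a common fiber
modulo this ideal can be replaced by twice as many smaller disjoint ones with the same property, and
iterating produces a Cantor set inside a single fiber.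
-/

section LusinNovikov

open Set TopologicalSpace MeasurableSpace Topology
open scoped ENNReal

variable {Z X ι κ : Type*}

/-- Members of the σ-ideal generated by the measurable sets on which `a` is injective,
restricted to the sets that are themselves measurable. -/
def IsSigmaInjective [MeasurableSpace Z] (a : Z → X) (G : Set Z) : Prop :=
  ∃ 𝒞 : Set (Set Z), 𝒞.Countable ∧ (∀ C ∈ 𝒞, MeasurableSet C ∧ InjOn a C) ∧ ⋃₀ 𝒞 = G

/-- The family `V` is positive for the ideal of `σ`-injective sets: whichever such set is
discarded, a single fiber of `a` still meets every `V i`. -/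
def MeetsCommonFiber [MeasurableSpace Z] (a : Z → X) (V : ι → Set Z) : Prop :=
  ∀ G, IsSigmaInjective a G → (⋂ i, a '' (V i \ G)).Nonempty

namespace IsSigmaInjective

variable [MeasurableSpace Z] {a : Z → X} {G H : Set Z}

lemma measurableSet (hG : IsSigmaInjective a G) : MeasurableSet G := by
  obtain ⟨𝒞, h𝒞, hC, rfl⟩ := hG
  exact .sUnion h𝒞 fun C hC𝒞 => (hC C hC𝒞).1

lemma of_injOn (hG : MeasurableSet G) (ha : InjOn a G) : IsSigmaInjective a G :=
  ⟨{G}, countable_singleton G, by simp [hG, ha], sUnion_singleton G⟩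

lemma iUnion [Countable ι] {G : ι → Set Z} (hG : ∀ i, IsSigmaInjective a (G i)) :
    IsSigmaInjective a (⋃ i, G i) := by
  choose 𝒞 h𝒞 hC hU using hG
  refine ⟨⋃ i, 𝒞 i, countable_iUnion h𝒞, fun C hC𝒞 => ?_, by simp only [sUnion_iUnion, hU]⟩
  obtain ⟨i, hi⟩ := mem_iUnion.1 hC𝒞
  exact hC i C hi

lemma union (hG : IsSigmaInjective a G) (hH : IsSigmaInjective a H) :
    IsSigmaInjective a (G ∪ H) := by
  rw [union_eq_iUnion]
  exact iUnion (Bool.forall_bool.2 ⟨hH, hG⟩)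

lemma exists_iUnion_eq (hG : IsSigmaInjective a G) :
    ∃ C : ℕ → Set Z, (∀ k, MeasurableSet (C k)) ∧ (∀ k, InjOn a (C k)) ∧ ⋃ k, C k = G := by
  obtain ⟨𝒞, h𝒞, hC, rfl⟩ := hG
  obtain ⟨C, hrange⟩ := (h𝒞.insert ∅).exists_eq_range (insert_nonempty ∅ 𝒞)
  have hC' : ∀ k, MeasurableSet (C k) ∧ InjOn a (C k) := by
    rw [← forall_mem_range (p := fun D => MeasurableSet D ∧ InjOn a D), ← hrange]
    rintro D (rfl | hD)
    exacts [⟨.empty, injOn_empty a⟩, hC D hD]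
  refine ⟨C, fun k => (hC' k).1, fun k => (hC' k).2, ?_⟩
  rw [← sUnion_range, ← hrange, sUnion_insert, empty_union]

end IsSigmaInjective

namespace MeetsCommonFiber

lemma comp [MeasurableSpace Z] {a : Z → X} {V : ι → Set Z} (hV : MeetsCommonFiber a V)
    (e : κ → ι) : MeetsCommonFiber a (V ∘ e) := fun G hG =>
  (hV G hG).mono fun _ hx => mem_iInter.2 fun k => mem_iInter.1 hx (e k)

lemma of_not_isSigmaInjective_univ [MeasurableSpace Z] {a : Z → X}
    (ha : ¬ IsSigmaInjective a univ) : MeetsCommonFiber a fun _ : ι => univ := fun G hG => by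
  obtain ⟨z, hz⟩ := (ne_univ_iff_exists_notMem G).1 fun h => ha (h ▸ hG)
  exact ⟨a z, mem_iInter.2 fun _ => mem_image_of_mem a ⟨mem_univ z, hz⟩⟩

end MeetsCommonFiber

lemma analyticSet_inter [TopologicalSpace X] [T2Space X] {s t : Set X} (hs : AnalyticSet s)
    (ht : AnalyticSet t) : AnalyticSet (s ∩ t) := by
  rw [inter_eq_iInter]
  exact .iInter (Bool.forall_bool.2 ⟨ht, hs⟩)

lemma analyticSet_setOf_nontrivial_inter_fiber [MeasurableSpace Z] [StandardBorelSpace Z]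
    [TopologicalSpace X] [T2Space X] [SecondCountableTopology X] [MeasurableSpace X]
    [OpensMeasurableSpace X] {a : Z → X} (ha : Measurable a) {S : Set Z} (hS : MeasurableSet S) :
    AnalyticSet {x | (S ∩ a ⁻¹' {x}).Nontrivial} := by
  have hP : MeasurableSet (((S ×ˢ S) ∩ {p : Z × Z | a p.1 = a p.2}) \ diagonal Z) :=
    ((hS.prod hS).inter (measurableSet_eq_fun (ha.comp measurable_fst)
      (ha.comp measurable_snd))).diff measurableSet_diagonal
  convert hP.analyticSet_image (ha.comp measurable_fst) using 1
  ext x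
  constructor
  · rintro ⟨z, ⟨hz, rfl⟩, z', ⟨hz', he⟩, hne⟩
    exact ⟨(z, z'), ⟨⟨⟨hz, hz'⟩, he.symm⟩, hne⟩, rfl⟩
  · rintro ⟨⟨z, z'⟩, ⟨⟨⟨hz, hz'⟩, he⟩, hne⟩, rfl⟩
    exact ⟨z, ⟨hz, rfl⟩, z', ⟨hz', he.symm⟩, hne⟩

section PolishCodomain

variable [TopologicalSpace X] [PolishSpace X] [MeasurableSpace X] [BorelSpace X] {a : Z → X}

lemma exists_measurable_superset_disjoint_biInter {Q : ι → Set X} (hQ : ∀ i, AnalyticSet (Q i))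
    (s : Finset ι) {W : Set X} (hW : AnalyticSet W) (hdisj : Disjoint W (⋂ i ∈ s, Q i)) :
    ∃ B : ι → Set X, (∀ i, MeasurableSet (B i)) ∧ (∀ i, Q i ⊆ B i) ∧
      Disjoint W (⋂ i ∈ s, B i) := by
  classical
  induction s using Finset.induction_on generalizing W with
  | empty =>
    exact ⟨fun _ => univ, fun _ => .univ, fun i => subset_univ (Q i), by simpa using hdisj⟩
  | insert j s _ ih =>
    rw [Finset.set_biInter_insert] at hdisj
    obtain ⟨B, hB, hQB, hBdisj⟩ := ih (analyticSet_inter hW (hQ j)) (disjoint_assoc.2 hdisj)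
    have hWB : AnalyticSet (W ∩ ⋂ i ∈ s, B i) :=
      analyticSet_inter hW (s.measurableSet_biInter fun i _ => hB i).analyticSet
    obtain ⟨C, hQC, hCdisj, hC⟩ := (hQ j).measurablySeparable hWB
      (disjoint_left.2 fun x hxQ hx => disjoint_left.1 hBdisj ⟨hx.1, hxQ⟩ hx.2)
    refine ⟨fun i => B i ∩ {x | i = j → x ∈ C}, fun i => ?_, fun i => ?_, ?_⟩
    · by_cases hij : i = j <;> simp [hij, hB, hC]
    · rintro x hx
      exact ⟨hQB i hx, fun hij => hQC (hij ▸ hx)⟩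
    · refine disjoint_left.2 fun x hxW hx => ?_
      simp only [mem_iInter] at hx
      exact disjoint_left.1 hCdisj
        ⟨hxW, mem_iInter₂.2 fun i hi => (hx i (Finset.mem_insert_of_mem hi)).1⟩
        ((hx j (Finset.mem_insert_self j s)).2 rfl)

lemma exists_measurable_superset_iInter_eq_empty [Finite ι] {Q : ι → Set X}
    (hQ : ∀ i, AnalyticSet (Q i)) (hempty : ⋂ i, Q i = ∅) :
    ∃ B : ι → Set X, (∀ i, MeasurableSet (B i)) ∧ (∀ i, Q i ⊆ B i) ∧ ⋂ i, B i = ∅ := by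
  have := Fintype.ofFinite ι
  simpa [MeasurableSet.univ.analyticSet, hempty] using
    exists_measurable_superset_disjoint_biInter hQ Finset.univ (W := univ)

lemma MeetsCommonFiber.exists_nontrivial_inter_fiber [MeasurableSpace Z] [StandardBorelSpace Z]
    [Finite ι] (ha : Measurable a) {V : ι → Set Z} (hVm : ∀ i, MeasurableSet (V i))
    (hV : MeetsCommonFiber a V) {G : Set Z} (hG : IsSigmaInjective a G) :
    ∃ x, ∀ i, ((V i \ G) ∩ a ⁻¹' {x}).Nontrivial := by
  by_contra! hcon
  have hS : ∀ i, MeasurableSet (V i \ G) := fun i => (hVm i).diff hG.measurableSet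
  obtain ⟨B, hB, hQB, hBempty⟩ := exists_measurable_superset_iInter_eq_empty
    (fun i => analyticSet_setOf_nontrivial_inter_fiber ha (hS i))
    (by simpa [eq_empty_iff_forall_notMem] using hcon)
  -- Off `a ⁻¹' B i` the map `a` is injective on `V i \ G`, and no fiber lies over all the `B i`.
  let H : ι → Set Z := fun i => (V i \ G) \ a ⁻¹' B i
  have hH : ∀ i, IsSigmaInjective a (H i) := fun i =>
    .of_injOn ((hS i).diff (ha (hB i))) fun z hz z' hz' he => by
      by_contra hne
      exact hz.2 (hQB i ⟨z, ⟨hz.1, rfl⟩, z', ⟨hz'.1, he.symm⟩, hne⟩)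
  obtain ⟨x, hx⟩ := hV _ (hG.union (.iUnion hH))
  have hxB : x ∈ ⋂ i, B i := mem_iInter.2 fun i => by
    obtain ⟨z, ⟨hzV, hzG⟩, rfl⟩ := mem_iInter.1 hx i
    by_contra hzB
    exact hzG (.inr (mem_iUnion.2 ⟨i, ⟨hzV, fun h => hzG (.inl h)⟩, hzB⟩))
  exact (hBempty ▸ hxB :)

lemma exists_disjoint_basis_pair_ediam_le [EMetricSpace Z]
    {𝓑 : Set (Set Z)} (h𝓑 : IsTopologicalBasis 𝓑) {V : Set Z} (hV : IsOpen V) {S : Set Z}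
    (hSV : S ⊆ V) (hS : S.Nontrivial) {ε : ℝ≥0∞} (hε : 0 < ε) :
    ∃ b : Bool → 𝓑, (∀ t, ((b t : Set Z) ∩ S).Nonempty) ∧ (∀ t, closure (b t : Set Z) ⊆ V) ∧
      (∀ t, Metric.ediam (b t : Set Z) ≤ ε) ∧ Disjoint (b false : Set Z) (b true : Set Z) := by
  obtain ⟨z, hz, z', hz', hne⟩ := hS
  obtain ⟨u, u', hu, hu', hzu, hzu', hdisj⟩ := t2_separation hne
  have key : ∀ w ∈ S, ∀ o, IsOpen o → w ∈ o → ∃ b : 𝓑, w ∈ (b : Set Z) ∧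
      closure (b : Set Z) ⊆ V ∩ o ∧ Metric.ediam (b : Set Z) ≤ ε := by
    intro w hw o ho hwo
    have hmem : V ∩ o ∩ Metric.eball w (ε / 2) ∈ 𝓝 w :=
      (((hV.inter ho).inter Metric.isOpen_eball).mem_nhds
        ⟨⟨hSV hw, hwo⟩, Metric.mem_eball_self (ENNReal.half_pos hε.ne')⟩)
    obtain ⟨b, hb, hwb, hsub⟩ := h𝓑.exists_closure_subset hmem
    refine ⟨⟨b, hb⟩, hwb, hsub.trans inter_subset_left, ?_⟩
    calc Metric.ediam b ≤ Metric.ediam (Metric.eball w (ε / 2)) :=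
          Metric.ediam_mono ((subset_closure.trans hsub).trans inter_subset_right)
      _ ≤ 2 * (ε / 2) := Metric.ediam_eball_le
      _ = ε := ENNReal.mul_div_cancel two_ne_zero ENNReal.ofNat_ne_top
  obtain ⟨b, hzb, hbV, hbε⟩ := key z hz u hu hzu
  obtain ⟨b', hzb', hbV', hbε'⟩ := key z' hz' u' hu' hzu'
  refine ⟨fun t => cond t b' b, Bool.forall_bool.2 ⟨⟨z, hzb, hz⟩, ⟨z', hzb', hz'⟩⟩,
    Bool.forall_bool.2 ⟨fun _ h => (hbV h).1, fun _ h => (hbV' h).1⟩,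
    Bool.forall_bool.2 ⟨hbε, hbε'⟩, ?_⟩
  exact hdisj.mono (fun _ h => (hbV (subset_closure h)).2) fun _ h => (hbV' (subset_closure h)).2

lemma MeetsCommonFiber.exists_refinement [EMetricSpace Z] [CompleteSpace Z]
    [SecondCountableTopology Z] [MeasurableSpace Z] [BorelSpace Z] [Finite ι]
    (ha : Measurable a) {V : ι → Set Z} (hVo : ∀ i, IsOpen (V i)) (hV : MeetsCommonFiber a V)
    {ε : ℝ≥0∞} (hε : 0 < ε) :
    ∃ W : Bool × ι → Set Z, MeetsCommonFiber a W ∧ (∀ p, IsOpen (W p)) ∧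
      (∀ p, closure (W p) ⊆ V p.2) ∧ (∀ p, Metric.ediam (W p) ≤ ε) ∧
      ∀ i, Disjoint (W (false, i)) (W (true, i)) := by
  have h𝓑 := isBasis_countableBasis Z
  have : Countable (countableBasis Z) := (countable_countableBasis Z).to_subtype
  by_contra! hcon
  let Admissible (W : Bool × ι → countableBasis Z) : Prop :=
    (∀ p, closure (W p : Set Z) ⊆ V p.2) ∧ (∀ p, Metric.ediam (W p : Set Z) ≤ ε) ∧
      ∀ i, Disjoint (W (false, i) : Set Z) (W (true, i) : Set Z)
  have hbad : ∀ W : {W // Admissible W}, ∃ G, IsSigmaInjective a G ∧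
      ¬ (⋂ p, a '' ((W.1 p : Set Z) \ G)).Nonempty := by
    rintro ⟨W, hWV, hWε, hWd⟩
    by_contra! hW
    obtain ⟨i, hi⟩ := hcon _ hW (fun p => h𝓑.isOpen (W p).2) hWV hWε
    exact hi (hWd i)
  choose G hG hGbad using hbad
  obtain ⟨x, hx⟩ := hV.exists_nontrivial_inter_fiber ha (fun i => (hVo i).measurableSet)
    (.iUnion hG)
  choose b hbx hbV hbε hbd using fun i =>
    exists_disjoint_basis_pair_ediam_le h𝓑 (hVo i) (inter_subset_left.trans sdiff_subset) (hx i)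
      hε
  let W : {W // Admissible W} :=
    ⟨fun p => b p.2 p.1, fun p => hbV p.2 p.1, fun p => hbε p.2 p.1, hbd⟩
  refine hGbad W ⟨x, mem_iInter.2 fun p => ?_⟩
  obtain ⟨z, hzb, ⟨-, hzG⟩, hzx⟩ := hbx p.2 p.1
  exact ⟨z, ⟨hzb, fun h => hzG (mem_iUnion.2 ⟨W, h⟩)⟩, hzx⟩

lemma exists_cantorScheme_image_iInter_nonempty [MetricSpace Z] [CompleteSpace Z]
    [SecondCountableTopology Z] [MeasurableSpace Z] [BorelSpace Z] (ha : Measurable a)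
    (hsmall : ¬ IsSigmaInjective a univ) :
    ∃ D : List Bool → Set Z, CantorScheme.ClosureAntitone D ∧ CantorScheme.VanishingDiam D ∧
      CantorScheme.Disjoint D ∧ ∀ n, (⋂ l : List.Vector Bool n, a '' D l.1).Nonempty := by
  let Level (n : ℕ) :=
    {V : List.Vector Bool n → Set Z // MeetsCommonFiber a V ∧ ∀ l, IsOpen (V l)}
  have hpos : ∀ n : ℕ, (0 : ℝ≥0∞) < (n : ℝ≥0∞)⁻¹ := fun n => by simp
  choose W hW hWo hWcl hWdiam hWdisj using fun n (V : Level n) =>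
    V.2.1.exists_refinement ha V.2.2 (hpos n)
  let level : ∀ n, Level n := fun n => Nat.rec
    ⟨fun _ => univ, .of_not_isSigmaInjective_univ hsmall, fun _ => isOpen_univ⟩
    (fun n V => ⟨fun l => W n V (l.head, l.tail),
      (hW n V).comp fun l : List.Vector Bool (n + 1) => (l.head, l.tail),
      fun l => hWo n V (l.head, l.tail)⟩) n
  let D : List Bool → Set Z := fun l => (level l.length).1 ⟨l, rfl⟩
  have hD : ∀ n (l : List.Vector Bool n), D l.1 = (level n).1 l := by
    rintro _ ⟨l, rfl⟩
    rfl
  have hDcons : ∀ l b, D (b :: l) = W l.length (level l.length) (b, ⟨l, rfl⟩) := fun l b => rfl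
  refine ⟨D, fun l b => ?_, fun β => ?_, fun l b b' hb => ?_, fun n => ?_⟩
  · rw [hDcons]
    exact hWcl _ _ _
  · rw [← tendsto_add_atTop_iff_nat 1]
    refine tendsto_of_tendsto_of_tendsto_of_le_of_le tendsto_const_nhds
      ENNReal.tendsto_inv_nat_nhds_zero (fun _ => zero_le) fun n => ?_
    simp only [PiNat.res_succ, hDcons]
    simpa using hWdiam (PiNat.res β n).length (level _) (β n, ⟨PiNat.res β n, rfl⟩)
  · simp only [hDcons]
    have := hWdisj l.length (level l.length) ⟨l, rfl⟩
    cases b <;> cases b' <;> first | exact absurd rfl hb | exact this | exact this.symm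
  · simpa [hD] using (level n).2.1 ∅ (.of_injOn .empty (injOn_empty a))

lemma exists_not_countable_fiber [TopologicalSpace Z] [PolishSpace Z] [MeasurableSpace Z]
    [BorelSpace Z] (ha : Continuous a) (hsmall : ¬ IsSigmaInjective a univ) :
    ∃ x, ¬ (a ⁻¹' {x}).Countable := by
  let _ := upgradeIsCompletelyMetrizable Z
  obtain ⟨D, hcl, hdiam, hdisj, hfiber⟩ := exists_cantorScheme_image_iInter_nonempty
    ha.measurable hsmall
  choose x hx using hfiber
  have hx' : ∀ l, x l.length ∈ a '' D l := fun l => mem_iInter.1 (hx l.length) ⟨l, rfl⟩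
  have hdom := hcl.map_of_vanishingDiam hdiam fun l => image_nonempty.1 ⟨_, hx' l⟩
  let f : (ℕ → Bool) → Z := fun β => (CantorScheme.inducedMap D).2 ⟨β, hdom ▸ mem_univ β⟩
  have hf : Injective f := fun β β' h => congrArg Subtype.val (hdisj.map_injective h)
  -- The fibers chosen at each level do not depend on the branch, so neither does their limit.
  have hlim : ∀ β, Tendsto x atTop (𝓝 (a (f β))) := fun β => by
    choose w hw hwx using fun n => hx' (PiNat.res β n)
    simp only [PiNat.res_length] at hwx
    have hwf : Tendsto w atTop (𝓝 (f β)) := tendsto_iff_edist_tendsto_0.2 <|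
      tendsto_of_tendsto_of_tendsto_of_le_of_le tendsto_const_nhds (hdiam β) (fun _ => zero_le)
        fun n => Metric.edist_le_ediam_of_mem (hw n) (CantorScheme.map_mem _ n)
    exact ((ha.tendsto _).comp hwf).congr hwx
  have hunc : Uncountable (ℕ → Bool) := by
    rw [← Cardinal.aleph0_lt_mk_iff]
    simpa using Cardinal.aleph0_lt_continuum
  refine ⟨a (f fun _ => false), fun hcount => ?_⟩
  have hcount' : (f ⁻¹' (a ⁻¹' {a (f fun _ => false)})).Countable :=
    hcount.preimage_of_injOn hf.injOn
  refine not_countable_univ (hcount'.mono fun β _ => ?_)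
  exact tendsto_nhds_unique (hlim β) (hlim _)

lemma isSigmaInjective_univ_of_continuous [TopologicalSpace Z] [PolishSpace Z] [MeasurableSpace Z]
    [BorelSpace Z] (ha : Continuous a) (hcount : ∀ x, (a ⁻¹' {x}).Countable) :
    IsSigmaInjective a univ := by
  by_contra hsmall
  obtain ⟨x, hx⟩ := exists_not_countable_fiber ha hsmall
  exact hx (hcount x)

end PolishCodomain

theorem isSigmaInjective_univ_of_countable_fibers [MeasurableSpace Z] [StandardBorelSpace Z]
    [MeasurableSpace X] [StandardBorelSpace X] {a : Z → X} (ha : Measurable a)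
    (hcount : ∀ x, (a ⁻¹' {x}).Countable) : IsSigmaInjective a univ := by
  let _ := upgradeStandardBorel Z
  let _ := upgradeStandardBorel X
  have hborel := eq_borel_upgradeStandardBorel Z
  have hpolish : PolishSpace Z := inferInstance
  obtain ⟨t, htle, hcont, ht⟩ := ha.exists_continuous
  have htborel : @BorelSpace Z t _ :=
    @BorelSpace.mk Z t _ (hborel.trans (borel_eq_borel_of_le ht hpolish htle).symm)
  exact @isSigmaInjective_univ_of_continuous Z X _ _ _ _ a t ht _ htborel hcont hcount

section Uniformization

variable {Y : Type*} [MeasurableSpace X] [StandardBorelSpace X] [MeasurableSpace Y]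
  [StandardBorelSpace Y] {R : Set (X × Y)}

lemma exists_injOn_fst_cover (hR : MeasurableSet R) (hcount : ∀ x, {y | (x, y) ∈ R}.Countable) :
    ∃ D : ℕ → Set (X × Y), (∀ k, MeasurableSet (D k)) ∧ (∀ k, InjOn Prod.fst (D k)) ∧
      ⋃ k, D k = R := by
  have := hR.standardBorel
  have hfiber : ∀ x, ((fun p : R => p.1.1) ⁻¹' {x}).Countable := fun x => by
    refine countable_of_injective_of_countable_image Subtype.val_injective.injOn <|
      ((hcount x).image (Prod.mk x)).mono ?_
    rintro _ ⟨⟨⟨_, y⟩, hy⟩, rfl, rfl⟩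
    exact ⟨y, hy, rfl⟩
  obtain ⟨C, hC, hCinj, hCR⟩ := (isSigmaInjective_univ_of_countable_fibers
    (measurable_fst.comp measurable_subtype_coe) hfiber).exists_iUnion_eq
  refine ⟨fun k => Subtype.val '' C k, fun k => hR.subtype_image (hC k), fun k => ?_, ?_⟩
  · rintro _ ⟨p, hp, rfl⟩ _ ⟨q, hq, rfl⟩ h
    rw [hCinj k hp hq h]
  · rw [← image_iUnion, hCR, image_univ, Subtype.range_coe]

lemma exists_measurable_section_of_injOn_fst [Nonempty Y] (hR : MeasurableSet R)
    (hinj : InjOn Prod.fst R) :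
    ∃ g : X → Y, Measurable g ∧ ∀ x ∈ Prod.fst '' R, (x, g x) ∈ R := by
  have := hR.standardBorel
  have hemb : MeasurableEmbedding fun p : R => p.1.1 :=
    (measurable_fst.comp measurable_subtype_coe).measurableEmbedding hinj.injective
  obtain ⟨g, hg, hgR⟩ := hemb.exists_measurable_extend
    (measurable_snd.comp measurable_subtype_coe) fun _ => inferInstance
  refine ⟨g, hg, ?_⟩
  rintro _ ⟨p, hp, rfl⟩
  have hgp : g p.1 = p.2 := congrFun hgR ⟨p, hp⟩
  rwa [hgp]

theorem measurableSet_image_fst_of_countable_sections (hR : MeasurableSet R)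
    (hcount : ∀ x, {y | (x, y) ∈ R}.Countable) : MeasurableSet (Prod.fst '' R) := by
  obtain ⟨D, hD, hDinj, rfl⟩ := exists_injOn_fst_cover hR hcount
  rw [image_iUnion]
  exact .iUnion fun k => (hD k).image_of_measurable_injOn measurable_fst (hDinj k)

theorem exists_measurable_section_of_countable_sections [Nonempty Y] (hR : MeasurableSet R)
    (hcount : ∀ x, {y | (x, y) ∈ R}.Countable) :
    ∃ f : X → Y, Measurable f ∧ ∀ x ∈ Prod.fst '' R, (x, f x) ∈ R := by
  obtain ⟨D, hD, hDinj, rfl⟩ := exists_injOn_fst_cover hR hcount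
  have hT : ∀ k, MeasurableSet (Prod.fst '' D k) := fun k =>
    (hD k).image_of_measurable_injOn measurable_fst (hDinj k)
  choose g hg hgD using fun k => exists_measurable_section_of_injOn_fst (hD k) (hDinj k)
  obtain ⟨f, hf, hfg⟩ := exists_measurable_piecewise (disjointed fun k => Prod.fst '' D k)
    (.disjointed hT) g hg fun i j hij x hx =>
      (disjoint_left.1 (disjoint_disjointed _ hij) hx.1 hx.2).elim
  refine ⟨f, hf, fun x hx => ?_⟩
  rw [image_iUnion, ← iUnion_disjointed] at hx
  obtain ⟨k, hk⟩ := mem_iUnion.1 hx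
  rw [hfg k hk]
  exact mem_iUnion.2 ⟨k, hgD k x (disjointed_subset _ k hk)⟩

end Uniformization

end LusinNovikov

section Gluing

open Set

variable {X : Type*} {E : X → X → Prop}

lemma l1dist_extend_zero {A B : Type*} {f : A → B} (hf : Injective f) (p q : A → ℝ) :
    l1dist (extend f p 0) (extend f q 0) = l1dist p q := by
  have h : (fun b => |extend f p 0 b - extend f q 0 b|) = extend f (fun a => |p a - q a|) 0 := by
    ext b
    by_cases hb : ∃ a, f a = b
    · obtain ⟨a, rfl⟩ := hb
      simp only [hf.extend_apply]
    · simp only [extend_apply' _ _ _ hb, Pi.zero_apply, sub_zero, abs_zero]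
  rw [l1dist, h, tsum_extend_zero hf, l1dist]

lemma IsProbOnClass.extend_zero {A : Set X} {p : A → ℝ} {x : A}
    (hp : IsProbOnClass (fun a b : A => E a b) p x) :
    IsProbOnClass E (extend Subtype.val p 0) x := by
  obtain ⟨hnonneg, hclass, hsum⟩ := hp
  refine ⟨fun y => ?_, fun y hy => ?_, (hasSum_extend_zero Subtype.val_injective).2 hsum⟩
  · by_cases hyA : ∃ a : A, a = y
    · obtain ⟨a, rfl⟩ := hyA
      simpa only [Subtype.val_injective.extend_apply] using hnonneg a
    · rw [extend_apply' _ _ _ hyA, Pi.zero_apply]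
  · by_cases hyA : ∃ a : A, a = y
    · obtain ⟨a, rfl⟩ := hyA
      exact hclass a (by simpa only [Subtype.val_injective.extend_apply] using hy)
    · exact absurd (extend_apply' _ _ _ hyA) hy

lemma image_fst_setOf_eq_saturation (E : X → X → Prop) (A : Set X) :
    Prod.fst '' {q : X × X | q.2 ∈ A ∧ E q.1 q.2} = Saturation E A := by
  ext x
  simp [Saturation]

lemma mem_saturation_congr (hE : Equivalence E) {A : Set X} {x y : X} (hxy : E x y) :
    x ∈ Saturation E A ↔ y ∈ Saturation E A :=
  exists_congr fun _ => and_congr_right fun _ => ⟨hE.trans (hE.symm hxy), hE.trans hxy⟩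

variable [MeasurableSpace X] {S T : Set X} {p : ℕ → X → X → ℝ}

/-- `p` witnesses Borel amenability at the points of `S`. Unlike in Borel amenability of `E↾S`, the
measures may charge points of the `E`-classes that lie outside `S`. -/
def IsAsymptoticallyInvariantOn (E : X → X → Prop) (S : Set X) (p : ℕ → X → X → ℝ) : Prop :=
  (∀ i, Measurable fun q : X × X => p i q.1 q.2) ∧
    (∀ i, ∀ x ∈ S, IsProbOnClass E (p i x) x) ∧
    ∀ x ∈ S, ∀ y ∈ S, E x y → ∀ ε : ℝ, 0 < ε → ∀ᶠ i in atTop, l1dist (p i x) (p i y) < ε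

lemma exists_isAsymptoticallyInvariantOn {A : Set X} (hA : MeasurableSet A)
    (hEA : BorelAmenable fun a b : A => E a b) : ∃ p, IsAsymptoticallyInvariantOn E A p := by
  obtain ⟨p, hp, hpm, hpinv⟩ := hEA
  let P (i : ℕ) (x y : X) : ℝ :=
    extend (Prod.map Subtype.val Subtype.val) (fun q : A × A => p i q.1 q.2) 0 (x, y)
  have hval : Injective (Prod.map Subtype.val Subtype.val : A × A → X × X) :=
    Subtype.val_injective.prodMap Subtype.val_injective
  have hP : ∀ i (x : A), P i x = extend Subtype.val (p i x) 0 := fun i x => by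
    ext y
    by_cases hy : y ∈ A
    · lift y to A using hy
      rw [Subtype.val_injective.extend_apply]
      exact hval.extend_apply _ _ (x, y)
    · rw [extend_apply' _ _ _ (by simpa using hy)]
      refine extend_apply' _ _ _ ?_
      rintro ⟨q, hq⟩
      obtain rfl : (q.2 : X) = y := congrArg Prod.snd hq
      exact hy q.2.2
  refine ⟨P, fun i => ?_, fun i x hx => ?_, fun x hx y hy hxy => ?_⟩
  · have hemb := MeasurableEmbedding.subtype_coe hA
    exact (hemb.prodMap hemb).measurable_extend (hpm i) measurable_const
  · rw [hP i ⟨x, hx⟩]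
    exact (hp i ⟨x, hx⟩).extend_zero
  · simp only [hP _ ⟨x, hx⟩, hP _ ⟨y, hy⟩, l1dist_extend_zero Subtype.val_injective]
    exact hpinv ⟨x, hx⟩ ⟨y, hy⟩ hxy

lemma IsAsymptoticallyInvariantOn.comp (hp : IsAsymptoticallyInvariantOn E S p)
    (hE : Equivalence E) {f : X → X} (hf : Measurable f) (hfS : MapsTo f T S)
    (hEf : ∀ x ∈ T, E x (f x)) :
    IsAsymptoticallyInvariantOn E T fun i x => p i (f x) := by
  obtain ⟨hpm, hprob, hinv⟩ := hp
  refine ⟨fun i => (hpm i).comp (hf.prodMap measurable_id), fun i x hx => ?_,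
    fun x hx y hy hxy => ?_⟩
  · obtain ⟨hnonneg, hclass, hsum⟩ := hprob i (f x) (hfS hx)
    exact ⟨hnonneg, fun y hy => hE.trans (hEf x hx) (hclass y hy), hsum⟩
  · exact hinv _ (hfS hx) _ (hfS hy)
      (hE.trans (hE.symm (hEf x hx)) (hE.trans hxy (hEf y hy)))

lemma IsCBER.measurableSet_saturation [StandardBorelSpace X] (hE : IsCBER E) {A : Set X}
    (hA : MeasurableSet A) : MeasurableSet (Saturation E A) := by
  obtain ⟨-, hEm, hEcount⟩ := hE
  rw [← image_fst_setOf_eq_saturation]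
  exact measurableSet_image_fst_of_countable_sections ((measurable_snd hA).inter hEm)
    fun x => (hEcount x).mono fun _ hy => hy.2

lemma IsCBER.exists_measurable_selector [StandardBorelSpace X] (hE : IsCBER E) {A : Set X}
    (hA : MeasurableSet A) :
    ∃ f : X → X, Measurable f ∧ ∀ x ∈ Saturation E A, f x ∈ A ∧ E x (f x) := by
  obtain ⟨-, hEm, hEcount⟩ := hE
  rcases isEmpty_or_nonempty X with _ | _
  · exact ⟨id, measurable_id, isEmptyElim⟩
  rw [← image_fst_setOf_eq_saturation]
  exact exists_measurable_section_of_countable_sections ((measurable_snd hA).inter hEm)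
    fun x => (hEcount x).mono fun _ hy => hy.2

lemma borelAmenable_of_invariant_cover {S : ℕ → Set X} (hS : ∀ n, MeasurableSet (S n))
    (hSE : ∀ n x y, E x y → (x ∈ S n ↔ y ∈ S n)) (hcover : ∀ x, ∃ n, x ∈ S n)
    {p : ℕ → ℕ → X → X → ℝ} (hp : ∀ n, IsAsymptoticallyInvariantOn E (S n) (p n)) :
    BorelAmenable E := by
  classical
  let N (x : X) : ℕ := Nat.find (hcover x)
  have hN : ∀ x, x ∈ S (N x) := fun x => Nat.find_spec (hcover x)
  refine ⟨fun i x => p (N x) i x, fun i x => (hp (N x)).2.1 i x (hN x), fun i => ?_,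
    fun x y hxy => ?_⟩
  · exact Measurable.find (f := fun n (q : X × X) => p n i q.1 q.2)
      (p := fun n (q : X × X) => q.1 ∈ S n) (fun n => (hp n).1 i)
      (fun n => measurable_fst (hS n)) fun q => hcover q.1
  · have hNxy : N x = N y := Nat.find_congr' fun {n} => hSE n x y hxy
    simpa only [hNxy] using (hp (N y)).2.2 x (hNxy ▸ hN x) y (hN y) hxy

end Gluing

theorem borel_amenable_of_countable_cover_general {X : Type*} [MeasurableSpace X]
    [StandardBorelSpace X] (E : X → X → Prop) (hE : IsCBER E)
    (A : ℕ → Set X) (hmeas : ∀ n, MeasurableSet (A n))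
    (hcover : (⋃ n, Saturation E (A n)) = Set.univ)
    (ham : ∀ n, BorelAmenable fun a b : A n => E a b) :
    BorelAmenable E := by
  choose p hp using fun n => exists_isAsymptoticallyInvariantOn (hmeas n) (ham n)
  choose f hf hfA using fun n => hE.exists_measurable_selector (hmeas n)
  have hpf : ∀ n, IsAsymptoticallyInvariantOn E (Saturation E (A n)) fun i x => p n i (f n x) :=
    fun n => (hp n).comp hE.1 (hf n) (fun x hx => (hfA n x hx).1) fun x hx => (hfA n x hx).2
  exact borelAmenable_of_invariant_cover (fun n => hE.measurableSet_saturation (hmeas n))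
    (fun _ _ _ => mem_saturation_congr hE.1) (Set.iUnion_eq_univ_iff.1 hcover) hpf

/-! ### STATEMENT 8 -/

theorem borel_amenable_of_countable_cover {X : Type*} [MeasurableSpace X]
    [StandardBorelSpace X] (E : X → X → Prop) (hE : IsCBER E)
    (A : ℕ → Set X) (hmeas : ∀ n, MeasurableSet (A n)) (hcover : (⋃ n, A n) = Set.univ)
    (ham : ∀ n, BorelAmenable fun a b : A n => E a b) :
    BorelAmenable E := by
  refine borel_amenable_of_countable_cover_general E hE A hmeas
    (Set.univ_subset_iff.1 (hcover ▸ ?_)) ham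
  exact Set.iUnion_mono fun n x hx => ⟨x, hx, hE.1.refl x⟩
end
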